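/- arXiv:1401.5022 — 3 statements merged into one kernel-verified Lean document; each statement's English description precedes it below -/
import Mathlib

section
/- Let T > 0, x0 ∈ ℝ, K = [−1,1], and let c, q : ℝ → ℝ be Lipschitz functions satisfying q(x)·(q(x) − c(x)) > 0 for every x ∈ ℝ. Then the optimal control problem 'minimize ∫₀ᵀ [c(x(t)) u(t) + u(t)²] dt over admissible pairs for the state equation x′(t) = q(x(t)) u(t) + u(t)²' admits at least one solution. -/
open MeasureTheory Filter Topology Set

/-- `Y` solves the state equation `Y' = q(Y) w + w ^ 2`, `Y 0 = x0` on `[0, T]` in integral form,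
for a control `w` with values in `[-1, 1]`. -/
structure IsTrajectory (T x0 : ℝ) (q : ℝ → ℝ) (Y w : ℝ → ℝ) : Prop where
  continuous : Continuous Y
  measurable : Measurable w
  abs_le : ∀ t, |w t| ≤ 1
  init : Y 0 = x0
  sub_eq : ∀ a b, 0 ≤ a → a ≤ b → b ≤ T →
    Y b - Y a = ∫ t in a..b, (q (Y t) * w t + w t ^ 2)

lemma intervalIntegrable_of_abs_le_one {w : ℝ → ℝ} (hw : Measurable w) (h : ∀ t, |w t| ≤ 1)
    (a b : ℝ) : IntervalIntegrable w volume a b :=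
  (intervalIntegrable_const (c := (1 : ℝ))).mono_fun hw.aestronglyMeasurable
    (Eventually.of_forall fun t => by simpa using h t)

lemma intervalIntegrable_sq_of_abs_le_one {w : ℝ → ℝ} (hw : Measurable w) (h : ∀ t, |w t| ≤ 1)
    (a b : ℝ) : IntervalIntegrable (fun t => w t ^ 2) volume a b :=
  intervalIntegrable_of_abs_le_one (hw.pow_const 2)
    (fun t => by rw [abs_pow]; exact pow_le_one₀ (abs_nonneg _) (h t)) a b

lemma intervalIntegrable_mul_add_sq {w f : ℝ → ℝ} (hw : Measurable w) (h : ∀ t, |w t| ≤ 1)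
    (hf : Continuous f) (a b : ℝ) :
    IntervalIntegrable (fun t => f t * w t + w t ^ 2) volume a b :=
  ((intervalIntegrable_of_abs_le_one hw h a b).continuousOn_mul hf.continuousOn).add
    (intervalIntegrable_sq_of_abs_le_one hw h a b)

lemma abs_mul_add_sq_le {k w B : ℝ} (hk : |k| ≤ B) (hw : |w| ≤ 1) : |k * w + w ^ 2| ≤ B + 1 := by
  have h1 : |k * w| ≤ B := by
    rw [abs_mul]; nlinarith [abs_nonneg k, abs_nonneg w]
  have h2 : |w ^ 2| ≤ 1 := by rw [abs_pow]; exact pow_le_one₀ (abs_nonneg _) hw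
  exact (abs_add_le _ _).trans (add_le_add h1 h2)

lemma LipschitzWith.abs_le_add {g : ℝ → ℝ} {L : NNReal} (hg : LipschitzWith L g) {x y R : ℝ}
    (h : |y - x| ≤ R) : |g y| ≤ |g x| + L * R := by
  have h1 : |g y - g x| ≤ L * |y - x| := by simpa [Real.dist_eq] using hg.dist_le_mul y x
  have h2 : L * |y - x| ≤ L * R := mul_le_mul_of_nonneg_left h L.2
  have h3 : |g y| ≤ |g x| + |g y - g x| := by
    simpa using abs_add_le (g x) (g y - g x)
  linarith

/-- An admissible pair can be modified, without changing its cost, into a trajectory. -/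
lemma exists_isTrajectory {T x0 : ℝ} (hT : 0 < T) {q : ℝ → ℝ} (c : ℝ → ℝ) {y v : ℝ → ℝ}
    (hv : Measurable v) (hv1 : ∀ᵐ t ∂(volume.restrict (Ioo 0 T)), v t ∈ Icc (-1 : ℝ) 1)
    {L : NNReal} (hy : LipschitzOnWith L y (Icc 0 T)) (hy0 : y 0 = x0)
    (hd : ∀ᵐ t ∂(volume.restrict (Ioo 0 T)), HasDerivAt y (q (y t) * v t + v t ^ 2) t) :
    ∃ Y w, IsTrajectory T x0 q Y w ∧
      ∫ t in Ioo 0 T, (c (y t) * v t + v t ^ 2) = ∫ t in 0..T, (c (Y t) * w t + w t ^ 2) := by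
  obtain ⟨Y, hY, hYy⟩ := hy.extend_real
  have hwv : ∀ᵐ t ∂(volume.restrict (Ioo 0 T)), max (-1) (min 1 (v t)) = v t := by
    filter_upwards [hv1] with t ht
    rw [min_eq_right ht.2, max_eq_right ht.1]
  refine ⟨Y, fun t => max (-1) (min 1 (v t)), ⟨hY.continuous, by fun_prop, fun t => ?_, ?_, ?_⟩, ?_⟩
  · rw [abs_le]
    exact ⟨le_max_left _ _, max_le (by norm_num) (min_le_left _ _)⟩
  · rw [← hYy ⟨le_rfl, hT.le⟩, hy0]
  · intro a b ha hab hb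
    have hac : AbsolutelyContinuousOnInterval Y a b :=
      (hY.lipschitzOnWith (s := uIcc a b)).absolutelyContinuousOnInterval
    rw [← hac.integral_deriv_eq_sub, intervalIntegral.integral_of_le hab,
      intervalIntegral.integral_of_le hab, integral_Ioc_eq_integral_Ioo,
      integral_Ioc_eq_integral_Ioo]
    refine integral_congr_ae ?_
    have hsub : Ioo a b ⊆ Ioo 0 T := Ioo_subset_Ioo ha hb
    filter_upwards [ae_restrict_of_ae_restrict_of_subset hsub hwv,
      ae_restrict_of_ae_restrict_of_subset hsub hd, ae_restrict_mem measurableSet_Ioo] with t h1 h2 h3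
    have h3' := hsub h3
    have heq : Y =ᶠ[𝓝 t] y := by
      filter_upwards [Ioo_mem_nhds h3'.1 h3'.2] with s hs
      exact (hYy (Ioo_subset_Icc_self hs)).symm
    rw [h1, (h2.congr_of_eventuallyEq heq).deriv, heq.self_of_nhds]
  · rw [intervalIntegral.integral_of_le hT.le, integral_Ioc_eq_integral_Ioo]
    refine integral_congr_ae ?_
    filter_upwards [hwv, ae_restrict_mem measurableSet_Ioo] with t h1 h2
    rw [h1, hYy (Ioo_subset_Icc_self h2)]

/-- Trajectories are bounded on `[0, T]`, uniformly in the control. -/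
lemma exists_trajectory_bound {T x0 : ℝ} {q : ℝ → ℝ} {L : NNReal}
    (hq : LipschitzWith L q) :
    ∃ R : ℝ, ∀ Y w, IsTrajectory T x0 q Y w → ∀ t ∈ Icc 0 T, |Y t - x0| ≤ R := by
  refine ⟨gronwallBound 0 L (|q x0| + 1) T, fun Y w h t ht => ?_⟩
  set f : ℝ → ℝ := fun t => |q x0| + L * |Y t - x0| + 1 with hf
  have hfc : Continuous f := by
    have := h.continuous
    fun_prop
  have hfnn : ∀ t, 0 ≤ f t := fun t => by positivity
  have hYf : ∀ t ∈ Icc 0 T, |Y t - x0| ≤ ∫ s in 0..t, f s := by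
    intro t ht
    rw [← h.init, h.sub_eq 0 t le_rfl ht.1 ht.2]
    rw [← Real.norm_eq_abs]
    refine intervalIntegral.norm_integral_le_of_norm_le (μ := volume) ht.1 ?_
      (hfc.intervalIntegrable _ _)
    exact Eventually.of_forall fun s _ => abs_mul_add_sq_le (hq.abs_le_add le_rfl) (h.abs_le s)
  have hG : ∀ t, HasDerivAt (fun t => ∫ s in 0..t, f s) (f t) t := fun t =>
    intervalIntegral.integral_hasDerivAt_right (hfc.intervalIntegrable _ _)
      (hfc.stronglyMeasurableAtFilter _ _) hfc.continuousAt
  have key := norm_le_gronwallBound_of_norm_deriv_right_le (f := fun t => ∫ s in 0..t, f s)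
    (f' := f) (δ := 0) (K := L) (ε := |q x0| + 1) (a := 0) (b := T)
    (fun t _ => (hG t).continuousAt.continuousWithinAt) (fun t _ => (hG t).hasDerivWithinAt)
    (by simp) (fun t ht => by
      have h1 := hYf t (Ico_subset_Icc_self ht)
      have h2 : L * |Y t - x0| ≤ L * |∫ s in 0..t, f s| :=
        mul_le_mul_of_nonneg_left (h1.trans (le_abs_self _)) L.2
      rw [Real.norm_of_nonneg (hfnn t), Real.norm_eq_abs]
      simp only [hf]
      linarith) t ht
  refine (hYf t ht).trans ((le_abs_self _).trans (key.trans ?_))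
  exact gronwallBound_mono le_rfl (by positivity) L.2 (by linarith [ht.2])

/-- Freezing the coefficient `f` at the left end point costs a quadratic error. -/
lemma abs_integral_sub_frozen_le {w f : ℝ → ℝ} (hw : Measurable w) (h : ∀ t, |w t| ≤ 1)
    (hf : Continuous f) {a b K : ℝ} (hK : 0 ≤ K) (hab : a ≤ b)
    (hfK : ∀ t ∈ Icc a b, |f t - f a| ≤ K * (t - a)) :
    |(∫ t in a..b, (f t * w t + w t ^ 2)) - f a * (∫ t in a..b, w t) - ∫ t in a..b, w t ^ 2|
      ≤ K * (b - a) ^ 2 := by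
  have e : (∫ t in a..b, (f t * w t + w t ^ 2)) - f a * (∫ t in a..b, w t)
      - ∫ t in a..b, w t ^ 2 = ∫ t in a..b, (f t - f a) * w t := by
    rw [← intervalIntegral.integral_const_mul, ← intervalIntegral.integral_sub,
      ← intervalIntegral.integral_sub]
    · congr 1; ext t; ring
    · exact (intervalIntegrable_mul_add_sq hw h hf a b).sub
        ((intervalIntegrable_of_abs_le_one hw h a b).const_mul _)
    · exact intervalIntegrable_sq_of_abs_le_one hw h a b
    · exact intervalIntegrable_mul_add_sq hw h hf a b
    · exact (intervalIntegrable_of_abs_le_one hw h a b).const_mul _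
  rw [e]
  have := intervalIntegral.norm_integral_le_of_norm_le_const (a := a) (b := b)
    (f := fun t => (f t - f a) * w t) (C := K * (b - a)) (fun t ht => by
      rw [uIoc_of_le hab] at ht
      have h1 := hfK t (Ioc_subset_Icc_self ht)
      rw [Real.norm_eq_abs, abs_mul]
      have h2 : K * (t - a) ≤ K * (b - a) := mul_le_mul_of_nonneg_left (by linarith [ht.2]) hK
      nlinarith [abs_nonneg (f t - f a), abs_nonneg (w t), h t])
  rw [abs_of_nonneg (sub_nonneg.2 hab)] at this
  calc _ ≤ K * (b - a) * (b - a) := this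
    _ = _ := by ring

/-- Pointwise compactness along an ultrafilter of uniformly Lipschitz functions on an interval. -/
lemma exists_lipschitz_ultrafilter_limit {ι : Type*} (U : Ultrafilter ι) {T x0 : ℝ} (hT : 0 ≤ T)
    {K : NNReal} {f : ι → ℝ → ℝ} (hf : ∀ n, LipschitzOnWith K (f n) (Icc 0 T))
    (h0 : ∀ n, f n 0 = x0) :
    ∃ g : ℝ → ℝ, LipschitzWith K g ∧ ∀ t ∈ Icc 0 T, Tendsto (fun n => f n t) U (𝓝 (g t)) := by
  have hlim : ∀ t, ∃ z, t ∈ Icc 0 T → Tendsto (fun n => f n t) U (𝓝 z) := by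
    intro t
    by_cases ht : t ∈ Icc 0 T
    · have hmem : ∀ n, f n t ∈ Metric.closedBall x0 (K * dist t 0) := fun n => by
        rw [Metric.mem_closedBall, ← h0 n]
        exact (hf n).dist_le_mul t ht 0 ⟨le_rfl, hT⟩
      obtain ⟨z, -, hz⟩ := (isCompact_closedBall x0 (K * dist t 0)).ultrafilter_le_nhds'
        (U.map fun n => f n t) (Ultrafilter.mem_map.2 (univ_mem' hmem))
      exact ⟨z, fun _ => hz⟩
    · exact ⟨0, fun h => absurd h ht⟩
  choose g hg using hlim
  have hgL : LipschitzOnWith K g (Icc 0 T) := LipschitzOnWith.of_dist_le_mul fun s hs t ht =>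
    le_of_tendsto ((hg s hs).dist (hg t ht)) (Eventually.of_forall fun n =>
      (hf n).dist_le_mul s hs t ht)
  obtain ⟨G, hG, hGg⟩ := hgL.extend_real
  exact ⟨G, hG, fun t ht => hGg ht ▸ hg t ht⟩

lemma HasDerivAt.nonpos_of_sub_le_sq {F : ℝ → ℝ} {d t T E : ℝ} (hF : HasDerivAt F d t)
    (htT : t < T) (h : ∀ b, t < b → b ≤ T → F b - F t ≤ E * (b - t) ^ 2) : d ≤ 0 := by
  have h1 : Tendsto (slope F t) (𝓝[>] t) (𝓝 d) :=
    (hasDerivWithinAt_iff_tendsto_slope' self_notMem_Ioi).1 hF.hasDerivWithinAt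
  have h2 : Tendsto (fun b => E * (b - t)) (𝓝[>] t) (𝓝 0) := by
    have : Continuous fun b => E * (b - t) := by fun_prop
    simpa using (this.tendsto t).mono_left nhdsWithin_le_nhds
  refine le_of_tendsto_of_tendsto h1 h2 ?_
  filter_upwards [Ioc_mem_nhdsGT htT] with b hb
  rw [slope_def_field, div_le_iff₀ (sub_pos.2 hb.1)]
  calc _ ≤ E * (b - t) ^ 2 := h b hb.1 hb.2
    _ = _ := by ring

/-- The control solving `q u + u ^ 2 = d` that is cheapest for the running cost. -/
noncomputable def cheapControl (q d : ℝ) : ℝ :=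
  if 0 < q then (-q + √(q ^ 2 + 4 * d)) / 2 else (-q - √(q ^ 2 + 4 * d)) / 2

lemma cheapControl_spec {q c m s : ℝ} (hqc : 0 < q * (q - c)) (hms : m ^ 2 ≤ s) (hs : s ≤ 1) :
    cheapControl q (q * m + s) ∈ Icc (-1 : ℝ) 1 ∧
    q * cheapControl q (q * m + s) + cheapControl q (q * m + s) ^ 2 = q * m + s ∧
    c * cheapControl q (q * m + s) + cheapControl q (q * m + s) ^ 2 ≤ c * m + s := by
  have hm := abs_le.1 ((sq_le_one_iff_abs_le_one m).1 (hms.trans hs))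
  have hD : 0 ≤ q ^ 2 + 4 * (q * m + s) := by nlinarith [sq_nonneg (q + 2 * m)]
  have hr := Real.sq_sqrt hD
  have hr1 : |q + 2 * m| ≤ √(q ^ 2 + 4 * (q * m + s)) :=
    Real.abs_le_sqrt (by nlinarith)
  have hr2 := abs_le.1 hr1
  unfold cheapControl
  set r := √(q ^ 2 + 4 * (q * m + s))
  have hr0 : 0 ≤ r := Real.sqrt_nonneg _
  split_ifs with hq
  · have hqc' : 0 < q - c := (pos_iff_pos_of_mul_pos hqc).1 hq
    have hr3 : r ≤ q + 2 := Real.sqrt_le_iff.2 ⟨by linarith, by nlinarith⟩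
    refine ⟨⟨by linarith, by linarith⟩, by nlinarith, ?_⟩
    have : 0 ≤ (q - c) * ((-q + r) / 2 - m) := mul_nonneg hqc'.le (by linarith)
    nlinarith
  · have hq' : q < 0 := lt_of_le_of_ne (not_lt.1 hq) (by rintro rfl; simp at hqc)
    have hqc' : q - c < 0 := (neg_iff_neg_of_mul_pos hqc).1 hq'
    have hr3 : r ≤ 2 - q := Real.sqrt_le_iff.2 ⟨by linarith, by nlinarith⟩
    refine ⟨⟨by linarith, by linarith⟩, by nlinarith, ?_⟩
    have : 0 ≤ (q - c) * ((-q - r) / 2 - m) :=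
      mul_nonneg_of_nonpos_of_nonpos hqc'.le (by linarith)
    nlinarith

lemma measurable_cheapControl : Measurable fun p : ℝ × ℝ => cheapControl p.1 p.2 := by
  unfold cheapControl
  exact Measurable.ite (measurableSet_lt measurable_const measurable_fst) (by fun_prop)
    (by fun_prop)

lemma lipschitzOnWith_of_sub_eq_integral {F f : ℝ → ℝ} {T : ℝ} {K : NNReal}
    (h : ∀ a b, 0 ≤ a → a ≤ b → b ≤ T → F b - F a = ∫ t in a..b, f t)
    (hf : ∀ t ∈ Icc 0 T, |f t| ≤ K) : LipschitzOnWith K F (Icc 0 T) := by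
  have key : ∀ a ∈ Icc 0 T, ∀ b ∈ Icc 0 T, a ≤ b → dist (F b) (F a) ≤ K * dist b a := by
    intro a ha b hb hab
    rw [Real.dist_eq, Real.dist_eq, h a b ha.1 hab hb.2, ← Real.norm_eq_abs]
    refine intervalIntegral.norm_integral_le_of_norm_le_const fun t ht => ?_
    rw [uIoc_of_le hab] at ht
    exact hf t ⟨ha.1.trans ht.1.le, ht.2.trans hb.2⟩
  refine LipschitzOnWith.of_dist_le_mul fun a ha b hb => ?_
  rcases le_total a b with hab | hab
  · rw [dist_comm (F a), dist_comm a]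
    exact key a ha b hb hab
  · exact key b hb a ha hab

/-- A limit of solutions of `F' = g(Y) w + w ^ 2` solves the relaxed equation
`F' = g(X) M' + S'`, where `M'` and `S'` are the weak limits of `w` and `w ^ 2`. -/
lemma deriv_eq_of_tendsto {ι : Type*} {U : Ultrafilter ι} {T t dF m s : ℝ} {g : ℝ → ℝ}
    {K L : NNReal} (hg : LipschitzWith L g) {Y w F : ι → ℝ → ℝ} {X G M S : ℝ → ℝ}
    (hw : ∀ n, Measurable (w n)) (hw1 : ∀ n t, |w n t| ≤ 1) (hYc : ∀ n, Continuous (Y n))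
    (hYL : ∀ n, LipschitzOnWith K (Y n) (Icc 0 T))
    (hF : ∀ n a b, 0 ≤ a → a ≤ b → b ≤ T →
      F n b - F n a = ∫ t in a..b, (g (Y n t) * w n t + w n t ^ 2))
    (hX : ∀ t ∈ Icc 0 T, Tendsto (fun n => Y n t) U (𝓝 (X t)))
    (hG : ∀ t ∈ Icc 0 T, Tendsto (fun n => F n t) U (𝓝 (G t)))
    (hM : ∀ t ∈ Icc 0 T, Tendsto (fun n => ∫ r in 0..t, w n r) U (𝓝 (M t)))
    (hS : ∀ t ∈ Icc 0 T, Tendsto (fun n => ∫ r in 0..t, w n r ^ 2) U (𝓝 (S t)))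
    (ht : t ∈ Ioo 0 T) (hdF : HasDerivAt G dF t) (hdM : HasDerivAt M m t)
    (hdS : HasDerivAt S s t) : dF = g (X t) * m + s := by
  have ht' := Ioo_subset_Icc_self ht
  have key : ∀ b, t < b → b ≤ T →
      |G b - G t - g (X t) * (M b - M t) - (S b - S t)| ≤ (L * K) * (b - t) ^ 2 := by
    intro b htb hbT
    have hb : b ∈ Icc 0 T := ⟨ht'.1.trans htb.le, hbT⟩
    refine le_of_tendsto (((((hG b hb).sub (hG t ht')).sub
      (((hg.continuous.tendsto _).comp (hX t ht')).mul ((hM b hb).sub (hM t ht')))).sub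
      ((hS b hb).sub (hS t ht'))).abs) (Eventually.of_forall fun n => ?_)
    have hi := intervalIntegrable_of_abs_le_one (hw n) (hw1 n)
    have hi2 := intervalIntegrable_sq_of_abs_le_one (hw n) (hw1 n)
    rw [hF n t b ht'.1 htb.le hbT, intervalIntegral.integral_interval_sub_left (hi _ _) (hi _ _),
      intervalIntegral.integral_interval_sub_left (hi2 _ _) (hi2 _ _)]
    refine abs_integral_sub_frozen_le (hw n) (hw1 n) (hg.continuous.comp (hYc n))
      (by positivity) htb.le fun r hr => ?_
    have h1 : |g (Y n r) - g (Y n t)| ≤ L * |Y n r - Y n t| := by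
      simpa [Real.dist_eq] using hg.dist_le_mul (Y n r) (Y n t)
    have h2 : |Y n r - Y n t| ≤ K * (r - t) := by
      have := (hYL n).dist_le_mul r ⟨ht'.1.trans hr.1, hr.2.trans hbT⟩ t ht'
      rwa [Real.dist_eq, Real.dist_eq, abs_of_nonneg (sub_nonneg.2 hr.1)] at this
    calc _ ≤ L * |Y n r - Y n t| := h1
      _ ≤ L * (K * (r - t)) := mul_le_mul_of_nonneg_left h2 L.2
      _ = _ := by ring
  have hD : HasDerivAt (fun b => G b - g (X t) * M b - S b) (dF - g (X t) * m - s) t :=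
    (hdF.sub (hdM.const_mul _)).sub hdS
  have h1 := hD.nonpos_of_sub_le_sq (E := L * K) ht.2 fun b h1 h2 => by
    have := (abs_le.1 (key b h1 h2)).2
    linarith
  have h2 := hD.neg.nonpos_of_sub_le_sq (E := L * K) ht.2 fun b h1 h2 => by
    have := (abs_le.1 (key b h1 h2)).1
    simp only [Pi.neg_apply]
    linarith
  linarith

/-- The derivatives of the limits of the first two moments of controls are moments of a
probability measure on `[-1, 1]`. -/
lemma sq_le_and_le_one_of_tendsto {ι : Type*} {U : Ultrafilter ι} {T t m s : ℝ}
    {w : ι → ℝ → ℝ} {M S : ℝ → ℝ}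
    (hw : ∀ n, Measurable (w n)) (hw1 : ∀ n t, |w n t| ≤ 1)
    (hM : ∀ t ∈ Icc 0 T, Tendsto (fun n => ∫ r in 0..t, w n r) U (𝓝 (M t)))
    (hS : ∀ t ∈ Icc 0 T, Tendsto (fun n => ∫ r in 0..t, w n r ^ 2) U (𝓝 (S t)))
    (ht : t ∈ Ioo 0 T) (hdM : HasDerivAt M m t) (hdS : HasDerivAt S s t) :
    m ^ 2 ≤ s ∧ s ≤ 1 := by
  have ht' := Ioo_subset_Icc_self ht
  have hi := fun n => intervalIntegrable_of_abs_le_one (hw n) (hw1 n)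
  have hi2 := fun n => intervalIntegrable_sq_of_abs_le_one (hw n) (hw1 n)
  constructor
  · have hD : HasDerivAt (fun b => 2 * m * M b - S b - m ^ 2 * b)
        (2 * m * m - s - m ^ 2 * 1) t :=
      ((hdM.const_mul _).sub hdS).sub ((hasDerivAt_id t).const_mul _)
    have := hD.nonpos_of_sub_le_sq (E := 0) ht.2 fun b htb hbT => by
      have hb : b ∈ Icc 0 T := ⟨ht'.1.trans htb.le, hbT⟩
      have key : 2 * m * (M b - M t) - (S b - S t) ≤ m ^ 2 * (b - t) := by
        refine le_of_tendsto ((((hM b hb).sub (hM t ht')).const_mul (2 * m)).sub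
          ((hS b hb).sub (hS t ht'))) (Eventually.of_forall fun n => ?_)
        rw [intervalIntegral.integral_interval_sub_left (hi n _ _) (hi n _ _),
          intervalIntegral.integral_interval_sub_left (hi2 n _ _) (hi2 n _ _),
          ← intervalIntegral.integral_const_mul, ← intervalIntegral.integral_sub
            ((hi n _ _).const_mul _) (hi2 n _ _)]
        have hc : ∫ _ in t..b, m ^ 2 = m ^ 2 * (b - t) := by
          rw [intervalIntegral.integral_const, smul_eq_mul, mul_comm]
        rw [← hc]
        exact intervalIntegral.integral_mono_on htb.le
          (((hi n _ _).const_mul _).sub (hi2 n _ _)) intervalIntegrable_const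
          fun r _ => by nlinarith [sq_nonneg (w n r - m)]
      linarith
    linarith
  · have hD : HasDerivAt (fun b => S b - b) (s - 1) t := hdS.sub (hasDerivAt_id t)
    have := hD.nonpos_of_sub_le_sq (E := 0) ht.2 fun b htb hbT => by
      have hb : b ∈ Icc 0 T := ⟨ht'.1.trans htb.le, hbT⟩
      have key : S b - S t ≤ b - t := by
        refine le_of_tendsto ((hS b hb).sub (hS t ht')) (Eventually.of_forall fun n => ?_)
        rw [intervalIntegral.integral_interval_sub_left (hi2 n _ _) (hi2 n _ _)]
        have hc : ∫ _ in t..b, (1 : ℝ) = b - t := by simp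
        rw [← hc]
        exact intervalIntegral.integral_mono_on htb.le (hi2 n _ _) intervalIntegrable_const
          fun r _ => (sq_le_one_iff_abs_le_one _).2 (hw1 n r)
      linarith
    linarith

/-- If the costs of a sequence of trajectories converge to `J`, some admissible pair has cost at
most `J`. -/
lemma exists_admissible_cost_le {T x0 J : ℝ} (hT : 0 < T) {c q : ℝ → ℝ} {Lc Lq : NNReal}
    (hc : LipschitzWith Lc c) (hq : LipschitzWith Lq q) (hcq : ∀ x, 0 < q x * (q x - c x))
    {Y w : ℕ → ℝ → ℝ} (hYw : ∀ n, IsTrajectory T x0 q (Y n) (w n))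
    (hJ : Tendsto (fun n => ∫ t in 0..T, (c (Y n t) * w n t + w n t ^ 2)) atTop (𝓝 J)) :
    ∃ x u : ℝ → ℝ,
      (Measurable u ∧ (∀ᵐ t ∂(volume.restrict (Ioo 0 T)), u t ∈ Icc (-1 : ℝ) 1) ∧
       (∃ Lx : NNReal, LipschitzOnWith Lx x (Icc 0 T)) ∧ x 0 = x0 ∧
       (∀ᵐ t ∂(volume.restrict (Ioo 0 T)), HasDerivAt x (q (x t) * u t + (u t) ^ 2) t)) ∧
      ∫ t in Ioo 0 T, (c (x t) * u t + (u t) ^ 2) ≤ J := by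
  obtain ⟨R, hR⟩ := exists_trajectory_bound (T := T) (x0 := x0) hq
  have hw := fun n => (hYw n).measurable
  have hw1 := fun n => (hYw n).abs_le
  have hYc := fun n => (hYw n).continuous
  have hi := fun n => intervalIntegrable_of_abs_le_one (hw n) (hw1 n)
  have hi2 := fun n => intervalIntegrable_sq_of_abs_le_one (hw n) (hw1 n)
  have hi3 := fun n => intervalIntegrable_mul_add_sq (hw n) (hw1 n)
    (hc.continuous.comp (hYc n))
  have hYL : ∀ n, LipschitzOnWith (|q x0| + Lq * R + 1).toNNReal (Y n) (Icc 0 T) := fun n =>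
    lipschitzOnWith_of_sub_eq_integral (hYw n).sub_eq fun t ht =>
      (abs_mul_add_sq_le (hq.abs_le_add (hR _ _ (hYw n) t ht)) (hw1 n t)).trans
        (Real.le_coe_toNNReal _)
  have hMs : ∀ n a b, 0 ≤ a → a ≤ b → b ≤ T →
      (∫ r in 0..b, w n r) - (∫ r in 0..a, w n r) = ∫ r in a..b, w n r := fun n a b _ _ _ =>
    intervalIntegral.integral_interval_sub_left (hi n _ _) (hi n _ _)
  have hSs : ∀ n a b, 0 ≤ a → a ≤ b → b ≤ T →
      (∫ r in 0..b, w n r ^ 2) - (∫ r in 0..a, w n r ^ 2) = ∫ r in a..b, w n r ^ 2 :=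
    fun n a b _ _ _ => intervalIntegral.integral_interval_sub_left (hi2 n _ _) (hi2 n _ _)
  have hCs : ∀ n a b, 0 ≤ a → a ≤ b → b ≤ T →
      (∫ r in 0..b, (c (Y n r) * w n r + w n r ^ 2)) -
        (∫ r in 0..a, (c (Y n r) * w n r + w n r ^ 2)) =
        ∫ r in a..b, (c (Y n r) * w n r + w n r ^ 2) :=
    fun n a b _ _ _ => intervalIntegral.integral_interval_sub_left (hi3 n _ _) (hi3 n _ _)
  let U : Ultrafilter ℕ := hyperfilter ℕ
  have hU : (U : Filter ℕ) ≤ atTop := Nat.hyperfilter_le_atTop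
  obtain ⟨X, hXL, hX⟩ := exists_lipschitz_ultrafilter_limit U hT.le hYL fun n => (hYw n).init
  obtain ⟨M, hML, hM⟩ := exists_lipschitz_ultrafilter_limit U hT.le (K := 1) (x0 := 0)
    (fun n => lipschitzOnWith_of_sub_eq_integral (hMs n) fun t _ => hw1 n t) (by simp)
  obtain ⟨S, hSL, hS⟩ := exists_lipschitz_ultrafilter_limit U hT.le (K := 1) (x0 := 0)
    (fun n => lipschitzOnWith_of_sub_eq_integral (hSs n) fun t _ => by
      rw [abs_pow]; exact pow_le_one₀ (abs_nonneg _) (hw1 n t)) (by simp)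
  obtain ⟨C, hCL, hC⟩ := exists_lipschitz_ultrafilter_limit U hT.le
    (K := (|c x0| + Lc * R + 1).toNNReal) (x0 := 0)
    (fun n => lipschitzOnWith_of_sub_eq_integral (hCs n) fun t ht =>
      (abs_mul_add_sq_le (hc.abs_le_add (hR _ _ (hYw n) t ht)) (hw1 n t)).trans
        (Real.le_coe_toNNReal _)) (by simp)
  have h0 : (0 : ℝ) ∈ Icc 0 T := ⟨le_rfl, hT.le⟩
  have hX0 : X 0 = x0 := by
    refine tendsto_nhds_unique (hX 0 h0) ?_
    simp [fun n => (hYw n).init]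
  have hC0 : C 0 = 0 := by
    refine tendsto_nhds_unique (hC 0 h0) ?_
    simp
  have hCT : C T = J := tendsto_nhds_unique (hC T ⟨hT.le, le_rfl⟩) (hJ.mono_left hU)
  set u : ℝ → ℝ := fun t => cheapControl (q (X t)) (deriv X t) with hu
  have hum : Measurable u := measurable_cheapControl.comp
    ((hq.continuous.comp hXL.continuous).measurable.prodMk (measurable_deriv X))
  have hae : ∀ᵐ t ∂(volume.restrict (Ioo 0 T)), u t ∈ Icc (-1 : ℝ) 1 ∧
      HasDerivAt X (q (X t) * u t + u t ^ 2) t ∧ c (X t) * u t + u t ^ 2 ≤ deriv C t := by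
    filter_upwards [ae_restrict_of_ae hXL.ae_differentiableAt_real,
      ae_restrict_of_ae hML.ae_differentiableAt_real,
      ae_restrict_of_ae hSL.ae_differentiableAt_real,
      ae_restrict_of_ae hCL.ae_differentiableAt_real,
      ae_restrict_mem measurableSet_Ioo] with t dX dM dS dC ht
    obtain ⟨hms, hs⟩ := sq_le_and_le_one_of_tendsto hw hw1 hM hS ht dM.hasDerivAt dS.hasDerivAt
    have eX := deriv_eq_of_tendsto hq hw hw1 hYc hYL (fun n => (hYw n).sub_eq) hX hX hM hS ht
      dX.hasDerivAt dM.hasDerivAt dS.hasDerivAt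
    have eC := deriv_eq_of_tendsto hc hw hw1 hYc hYL hCs hX hC hM hS ht
      dC.hasDerivAt dM.hasDerivAt dS.hasDerivAt
    obtain ⟨k1, k2, k3⟩ := cheapControl_spec (hcq (X t)) hms hs
    rw [← eX] at k1 k2 k3
    refine ⟨k1, ?_, k3.trans eC.ge⟩
    simp only [hu]
    rw [k2]
    exact dX.hasDerivAt
  refine ⟨X, u, ⟨hum, hae.mono fun t h => h.1, ⟨_, hXL.lipschitzOnWith⟩, hX0,
    hae.mono fun t h => h.2.1⟩, ?_⟩
  have hac : AbsolutelyContinuousOnInterval C 0 T :=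
    (hCL.lipschitzOnWith (s := uIcc 0 T)).absolutelyContinuousOnInterval
  have hint : ∫ t in Ioo 0 T, deriv C t = J := by
    rw [← integral_Ioc_eq_integral_Ioo, ← intervalIntegral.integral_of_le hT.le,
      hac.integral_deriv_eq_sub, hC0, hCT, sub_zero]
  rw [← hint]
  refine integral_mono_ae ?_ ?_ (hae.mono fun t h => h.2.2)
  · obtain ⟨B, hB⟩ := isCompact_Icc.exists_bound_of_continuousOn
      (s := Icc 0 T) (hc.continuous.comp hXL.continuous).continuousOn
    refine Measure.integrableOn_of_bounded (M := B + 1) (by simp) ?_ ?_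
    · exact (((hc.continuous.comp hXL.continuous).measurable.mul hum).add
        (hum.pow_const 2)).aestronglyMeasurable
    · filter_upwards [hae, ae_restrict_mem measurableSet_Ioo] with t h ht
      exact abs_mul_add_sq_le (hB t (Ioo_subset_Icc_self ht)) (abs_le.2 h.1)
  · exact ((intervalIntegrable_iff_integrableOn_Ioc_of_le hT.le).1
      hac.intervalIntegrable_deriv).mono_set Ioo_subset_Ioc_self

theorem stmt_15
    (T : ℝ) (hT : 0 < T) (x0 : ℝ)
    (c q : ℝ → ℝ)
    (hc : ∃ Lc : NNReal, LipschitzWith Lc c)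
    (hq : ∃ Lq : NNReal, LipschitzWith Lq q)
    (hcq : ∀ x : ℝ, 0 < q x * (q x - c x)) :
    ∃ (x : ℝ → ℝ) (u : ℝ → ℝ),
      (Measurable u ∧ (∀ᵐ t ∂(volume.restrict (Set.Ioo 0 T)), u t ∈ Set.Icc (-1:ℝ) 1) ∧
       (∃ Lx : NNReal, LipschitzOnWith Lx x (Set.Icc 0 T)) ∧ x 0 = x0 ∧
       (∀ᵐ t ∂(volume.restrict (Set.Ioo 0 T)),
          HasDerivAt x (q (x t) * u t + (u t) ^ 2) t)) ∧
      ∀ (y : ℝ → ℝ) (v : ℝ → ℝ),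
        (Measurable v ∧ (∀ᵐ t ∂(volume.restrict (Set.Ioo 0 T)), v t ∈ Set.Icc (-1:ℝ) 1) ∧
         (∃ Ly : NNReal, LipschitzOnWith Ly y (Set.Icc 0 T)) ∧ y 0 = x0 ∧
         (∀ᵐ t ∂(volume.restrict (Set.Ioo 0 T)),
            HasDerivAt y (q (y t) * v t + (v t) ^ 2) t)) →
        (∫ t in Set.Ioo 0 T, (c (x t) * u t + (u t) ^ 2)) ≤
          (∫ t in Set.Ioo 0 T, (c (y t) * v t + (v t) ^ 2)) := by
  obtain ⟨Lc, hc⟩ := hc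
  obtain ⟨Lq, hq⟩ := hq
  obtain ⟨R, hR⟩ := exists_trajectory_bound (T := T) (x0 := x0) hq
  let A : Set ℝ := {J | ∃ Y w, IsTrajectory T x0 q Y w ∧
    ∫ t in 0..T, (c (Y t) * w t + w t ^ 2) = J}
  have hA : A.Nonempty := ⟨_, fun _ => x0, fun _ => 0,
    ⟨continuous_const, measurable_const, by simp, rfl, by simp⟩, rfl⟩
  have hAb : BddBelow A := by
    refine ⟨-((|c x0| + Lc * R + 1) * |T - 0|), ?_⟩
    rintro _ ⟨Y, w, hYw, rfl⟩
    refine (abs_le.1 ((Real.norm_eq_abs _).symm.trans_le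
      (intervalIntegral.norm_integral_le_of_norm_le_const fun t ht => ?_))).1
    rw [uIoc_of_le hT.le] at ht
    exact abs_mul_add_sq_le (hc.abs_le_add (hR _ _ hYw t (Ioc_subset_Icc_self ht))) (hYw.abs_le t)
  obtain ⟨J, -, hJ, hJA⟩ := exists_seq_tendsto_sInf hA hAb
  choose Y w hYw hJe using hJA
  obtain ⟨x, u, hxu, hle⟩ := exists_admissible_cost_le hT hc hq hcq hYw
    (by simpa only [hJe] using hJ)
  refine ⟨x, u, hxu, ?_⟩
  rintro y v ⟨hv, hv1, ⟨L, hy⟩, hy0, hd⟩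
  obtain ⟨Z, z, hZ, hcost⟩ := exists_isTrajectory hT c hv hv1 hy hy0 hd
  rw [hcost]
  exact hle.trans (csInf_le hAb ⟨Z, z, hZ, rfl⟩)
end

section
/- Let T > 0, x0 ∈ ℝ, 0 < a_0 ≤ a_1, K = [a_0,a_1], and let c, q : ℝ → ℝ be Lipschitz functions satisfying c(x) < q(x) and q(x) > 0 for every x ∈ ℝ. Then the optimal control problem 'minimize ∫₀ᵀ [c(x(t)) u(t)² + u(t)³] dt over admissible pairs for the state equation x′(t) = q(x(t)) u(t)² + u(t)³' admits at least one solution. -/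
open MeasureTheory

/-- Change of variables `ξ = y t` along a Lipschitz curve `y`. -/
lemma setIntegral_comp_mul_deriv_of_lipschitzOnWith {T : ℝ} (hT : 0 ≤ T) {g y d : ℝ → ℝ}
    (hg : Continuous g) {L : NNReal} (hy : LipschitzOnWith L y (Set.Icc 0 T))
    (hd : ∀ᵐ t ∂(volume.restrict (Set.Ioo 0 T)), HasDerivAt y (d t) t) :
    IntegrableOn (fun t => g (y t) * d t) (Set.Ioo 0 T) ∧
      ∫ t in Set.Ioo 0 T, g (y t) * d t = ∫ ξ in (y 0)..(y T), g ξ := by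
  set Φ : ℝ → ℝ := fun X => ∫ ξ in (y 0)..X, g ξ with hΦ
  have hΦd : ∀ X, HasDerivAt Φ (g X) X := fun X => hg.integral_hasStrictDerivAt _ X |>.hasDerivAt
  have hΦc : ContDiff ℝ 1 Φ := by
    rw [contDiff_one_iff_deriv]
    refine ⟨fun X => (hΦd X).differentiableAt, ?_⟩
    rwa [show deriv Φ = g from funext fun X => (hΦd X).deriv]
  have himg : IsCompact (y '' Set.Icc 0 T) := isCompact_Icc.image_of_continuousOn hy.continuousOn
  obtain ⟨K, hK⟩ := LocallyLipschitzOn.exists_lipschitzOnWith_of_compact himg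
    (hΦc.locallyLipschitz.locallyLipschitzOn)
  have hcomp : LipschitzOnWith (K * L) (Φ ∘ y) (Set.uIcc 0 T) := by
    rw [Set.uIcc_of_le hT]
    exact hK.comp hy (Set.mapsTo_image _ _)
  have hac := hcomp.absolutelyContinuousOnInterval
  have hder : ∀ᵐ t ∂(volume.restrict (Set.Ioo 0 T)), deriv (Φ ∘ y) t = g (y t) * d t := by
    filter_upwards [hd] with t ht
    exact ((hΦd (y t)).comp t ht).deriv
  have hint := hac.intervalIntegrable_deriv
  rw [intervalIntegrable_iff_integrableOn_Ioo_of_le hT] at hint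
  refine ⟨hint.congr hder, ?_⟩
  rw [← integral_congr_ae hder, ← integral_Ioc_eq_integral_Ioo,
    ← intervalIntegral.integral_of_le hT, hac.integral_deriv_eq_sub]
  simp [hΦ]

lemma le_integral_exp_of_inv_le {k : ℝ → ℝ} (hk : Continuous k) {A : ℝ} (hA : 0 < A)
    (hkA : ∀ r, 0 ≤ r → (A * (1 + r))⁻¹ ≤ k r) (s : ℝ) :
    s ≤ ∫ r in (0 : ℝ)..Real.exp (A * s), k r := by
  have hR := Real.exp_pos (A * s)
  have hd : ∀ r ∈ Set.uIcc 0 (Real.exp (A * s)),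
      HasDerivAt (fun r => A⁻¹ * Real.log (1 + r)) ((A * (1 + r))⁻¹) r := by
    intro r hr
    rw [Set.uIcc_of_le hR.le] at hr
    have h1 : (1 + r) ≠ 0 := by linarith [hr.1]
    have h := (((hasDerivAt_id r).const_add 1).log h1).const_mul A⁻¹
    rwa [one_div, ← mul_inv] at h
  have hc : ContinuousOn (fun r : ℝ => (A * (1 + r))⁻¹) (Set.uIcc 0 (Real.exp (A * s))) := by
    refine ContinuousOn.inv₀ (by fun_prop) fun r hr => ?_
    rw [Set.uIcc_of_le hR.le] at hr
    have := hr.1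
    positivity
  have h1 := intervalIntegral.integral_eq_sub_of_hasDerivAt hd
    (hc.intervalIntegrable (μ := volume))
  have h2 := intervalIntegral.integral_mono_on hR.le (hc.intervalIntegrable (μ := volume))
    (hk.intervalIntegrable _ _) (fun r hr => hkA r hr.1)
  have h3 : A * s ≤ Real.log (1 + Real.exp (A * s)) := by
    rw [Real.le_log_iff_exp_le (by positivity)]
    linarith
  rw [h1] at h2
  simp only [add_zero, Real.log_one, mul_zero, sub_zero] at h2
  refine le_trans ?_ h2
  rw [inv_mul_eq_div, le_div_iff₀ hA]
  linarith

lemma le_integral_right_of_inv_le {g : ℝ → ℝ} (hg : Continuous g) {A x0 : ℝ} (hA : 0 < A)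
    (hgA : ∀ ξ, (A * (1 + |ξ - x0|))⁻¹ ≤ g ξ) (s : ℝ) :
    s ≤ ∫ ξ in x0..(x0 + Real.exp (A * s)), g ξ := by
  have h := le_integral_exp_of_inv_le (k := fun r => g (x0 + r)) (by fun_prop) hA
    (fun r hr => by simpa [abs_of_nonneg hr] using hgA (x0 + r)) s
  rwa [intervalIntegral.integral_comp_add_left, add_zero] at h

lemma integral_left_le_of_inv_le {g : ℝ → ℝ} (hg : Continuous g) {A x0 : ℝ} (hA : 0 < A)
    (hgA : ∀ ξ, (A * (1 + |ξ - x0|))⁻¹ ≤ g ξ) (s : ℝ) :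
    ∫ ξ in x0..(x0 - Real.exp (A * s)), g ξ ≤ -s := by
  have h := le_integral_exp_of_inv_le (k := fun r => g (x0 - r)) (by fun_prop) hA
    (fun r hr => by simpa [abs_of_nonneg hr] using hgA (x0 - r)) s
  rw [intervalIntegral.integral_comp_sub_left, sub_zero, intervalIntegral.integral_symm] at h
  linarith

lemma strictMono_integral_of_pos {g : ℝ → ℝ} (hg : Continuous g) (hpos : ∀ ξ, 0 < g ξ) (x0 : ℝ) :
    StrictMono fun X => ∫ ξ in x0..X, g ξ := by
  refine strictMono_of_deriv_pos fun X => ?_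
  rw [(hg.integral_hasStrictDerivAt x0 X).hasDerivAt.deriv]
  exact hpos X

/-- Global solvability of the autonomous equation with right-hand side `F`, for a continuous positive field of
linear growth, by inverting the travel time `X ↦ ∫ x0..X, 1 / F`. -/
lemma exists_solution_of_pos {F : ℝ → ℝ} (hF : Continuous F) (hpos : ∀ ξ, 0 < F ξ) {A x0 : ℝ}
    (hA : 0 < A) (hFA : ∀ ξ, F ξ ≤ A * (1 + |ξ - x0|)) :
    ∃ x : ℝ → ℝ, x 0 = x0 ∧ (∀ t, HasDerivAt x (F (x t)) t) ∧
      ∀ t X, ∫ ξ in x0..X, (F ξ)⁻¹ = t → x t = X := by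
  have hg : Continuous fun ξ => (F ξ)⁻¹ := hF.inv₀ fun ξ => (hpos ξ).ne'
  have hgA : ∀ ξ, (A * (1 + |ξ - x0|))⁻¹ ≤ (F ξ)⁻¹ := fun ξ => inv_anti₀ (hpos ξ) (hFA ξ)
  set G : ℝ → ℝ := fun X => ∫ ξ in x0..X, (F ξ)⁻¹ with hG
  have hGd : ∀ X, HasDerivAt G (F X)⁻¹ X := fun X =>
    (hg.integral_hasStrictDerivAt x0 X).hasDerivAt
  have hGm : StrictMono G := strictMono_integral_of_pos hg (fun ξ => inv_pos.2 (hpos ξ)) x0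
  have hGc : Continuous G := continuous_iff_continuousAt.2 fun X => (hGd X).continuousAt
  have hGs : Function.Surjective G := fun s =>
    mem_range_of_exists_le_of_exists_ge hGc
      ⟨_, by simpa using integral_left_le_of_inv_le hg hA hgA (-s)⟩
      ⟨_, le_integral_right_of_inv_le hg hA hgA s⟩
  let e := hGm.orderIsoOfSurjective G hGs
  have he : ∀ X, e.symm (G X) = X := fun X => e.symm_apply_apply X
  have he' : ∀ t, G (e.symm t) = t := fun t => e.apply_symm_apply t
  refine ⟨e.symm, ?_, fun t => ?_, ?_⟩
  · have : G x0 = 0 := by simp [hG]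
    rw [← this, he]
  · simpa using HasDerivAt.of_local_left_inverse (e.toHomeomorph.symm.continuous.continuousAt)
      (hGd (e.symm t)) (inv_ne_zero (hpos _).ne') (Filter.Eventually.of_forall he')
  · rintro t X rfl
    exact he X

lemma cube_mul_lt_cube_mul {p r s : ℝ} (hp : 0 < p) (hr : 0 < r) (hrs : r < s) :
    r ^ 3 * (2 * p + 3 * s) < s ^ 3 * (2 * p + 3 * r) := by
  have h3 : r ^ 3 < s ^ 3 := pow_lt_pow_left₀ hrs hr.le (by norm_num)
  have h2 : r ^ 2 < s ^ 2 := pow_lt_pow_left₀ hrs hr.le (by norm_num)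
  have : 0 < r * s := mul_pos hr (hr.trans hrs)
  nlinarith [mul_pos this (sub_pos.2 h2)]

/-- The multiplier condition characterising a minimiser of
`s ↦ (l - δ * s ^ 2) / (q * s ^ 2 + s ^ 3)` over an interval is sufficient. -/
lemma multiplier_le {a0 a1 l δ q u s : ℝ} (ha0 : 0 < a0) (hδ : 0 < δ) (hq : 0 < q)
    (hu : u ∈ Set.Icc a0 a1) (hs : s ∈ Set.Icc a0 a1)
    (h0 : a0 < u → δ * u ^ 3 ≤ l * (2 * q + 3 * u))
    (h1 : u < a1 → l * (2 * q + 3 * u) ≤ δ * u ^ 3) :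
    (l - δ * u ^ 2) * (q * s ^ 2 + s ^ 3) ≤ (l - δ * s ^ 2) * (q * u ^ 2 + u ^ 3) := by
  have hu0 : 0 < u := ha0.trans_le hu.1
  have hs0 : 0 < s := ha0.trans_le hs.1
  have hD : 0 < 2 * q + 3 * u := by positivity
  set B := q * (u + s) + u ^ 2 + u * s + s ^ 2 with hB
  have hB0 : 0 < B := by positivity
  have key : (l - δ * s ^ 2) * (q * u ^ 2 + u ^ 3) - (l - δ * u ^ 2) * (q * s ^ 2 + s ^ 3)
      = (u - s) * (l * B - δ * s ^ 2 * u ^ 2) := by rw [hB]; ring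
  have alg : u * B - s ^ 2 * (2 * q + 3 * u)
      = (u - s) * (q * (u + 2 * s) + u * (u + 2 * s)) := by rw [hB]; ring
  have hE : 0 < q * (u + 2 * s) + u * (u + 2 * s) := by positivity
  have hδu : 0 < δ * u ^ 2 := by positivity
  suffices 0 ≤ (u - s) * (l * B - δ * s ^ 2 * u ^ 2) by linarith
  rcases lt_trichotomy s u with h | rfl | h
  · have hl := h0 (hs.1.trans_lt h)
    refine mul_nonneg (sub_pos.2 h).le ?_
    have h5 := mul_le_mul_of_nonneg_right hl hB0.le
    have h6 := mul_pos hδu (mul_pos (sub_pos.2 h) hE)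
    rw [← alg] at h6
    have : 0 ≤ (l * B - δ * s ^ 2 * u ^ 2) * (2 * q + 3 * u) := by nlinarith
    exact nonneg_of_mul_nonneg_left this hD
  · simp
  · have hl := h1 (h.trans_le hs.2)
    refine mul_nonneg_of_nonpos_of_nonpos (sub_neg.2 h).le ?_
    have h5 := mul_le_mul_of_nonneg_right hl hB0.le
    have h6 := mul_pos hδu (mul_pos (sub_pos.2 h) hE)
    have h7 : (s - u) * (q * (u + 2 * s) + u * (u + 2 * s))
      = -(u * B - s ^ 2 * (2 * q + 3 * u)) := by rw [alg]; ring
    rw [h7] at h6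
    have : 0 ≤ (δ * s ^ 2 * u ^ 2 - l * B) * (2 * q + 3 * u) := by nlinarith
    linarith [nonneg_of_mul_nonneg_left this hD]

/-- The optimal feedback control as a continuous function of the multiplier and the state. -/
lemma exists_feedback {a0 a1 : ℝ} (ha0 : 0 < a0) (ha : a0 ≤ a1) {δ q : ℝ → ℝ}
    (hδ : Continuous δ) (hq : Continuous q) (hδ0 : ∀ ξ, 0 < δ ξ) (hq0 : ∀ ξ, 0 < q ξ) :
    ∃ U : ℝ → ℝ → ℝ, Continuous (Function.uncurry U) ∧ ∀ l ξ, U l ξ ∈ Set.Icc a0 a1 ∧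
      (∀ s ∈ Set.Icc a0 a1, (l - δ ξ * U l ξ ^ 2) * (q ξ * s ^ 2 + s ^ 3) ≤
        (l - δ ξ * s ^ 2) * (q ξ * U l ξ ^ 2 + U l ξ ^ 3)) ∧
      (l = 0 → U l ξ = a0) ∧ (δ ξ * a1 ^ 2 ≤ l → U l ξ = a1) := by
  have hex : ∀ l ξ, ∃ u ∈ Set.Icc a0 a1, (a0 < u → δ ξ * u ^ 3 ≤ l * (2 * q ξ + 3 * u)) ∧
      (u < a1 → l * (2 * q ξ + 3 * u) ≤ δ ξ * u ^ 3) := by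
    intro l ξ
    set f : ℝ → ℝ := fun u => δ ξ * u ^ 3 - l * (2 * q ξ + 3 * u) with hf
    by_cases h0 : 0 ≤ f a0
    · exact ⟨a0, ⟨le_rfl, ha⟩, fun h => absurd h (lt_irrefl _), fun _ => by
        simpa [hf] using h0⟩
    by_cases h1 : f a1 ≤ 0
    · exact ⟨a1, ⟨ha, le_rfl⟩, fun _ => by simpa [hf] using h1, fun h => absurd h (lt_irrefl _)⟩
    push Not at h0 h1
    obtain ⟨u, hu, hu0⟩ := intermediate_value_Icc ha (f := f)
      (by fun_prop) (show (0 : ℝ) ∈ Set.Icc (f a0) (f a1) from ⟨h0.le, h1.le⟩)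
    have : δ ξ * u ^ 3 = l * (2 * q ξ + 3 * u) := by
      simpa [hf, sub_eq_zero] using hu0
    exact ⟨u, hu, fun _ => this.le, fun _ => this.ge⟩
  choose U hU h0 h1 using hex
  have hlt : ∀ l ξ r s, 0 < r → r < s → δ ξ * s ^ 3 ≤ l * (2 * q ξ + 3 * s) →
      δ ξ * r ^ 3 < l * (2 * q ξ + 3 * r) := by
    intro l ξ r s hr hrs h
    have hqξ := hq0 ξ
    have hs := hr.trans hrs
    have hmul := mul_lt_mul_of_pos_left (cube_mul_lt_cube_mul hqξ hr hrs) (hδ0 ξ)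
    have hmul' := mul_le_mul_of_nonneg_right h (show 0 ≤ 2 * q ξ + 3 * r by positivity)
    refine lt_of_mul_lt_mul_right (a := 2 * q ξ + 3 * s) ?_ (by positivity)
    nlinarith
  have hgt : ∀ l ξ r s, 0 < r → r < s → l * (2 * q ξ + 3 * r) ≤ δ ξ * r ^ 3 →
      l * (2 * q ξ + 3 * s) < δ ξ * s ^ 3 := by
    intro l ξ r s hr hrs h
    by_contra! h'
    exact absurd (hlt l ξ r s hr hrs h') (not_lt.2 h)
  have hgt_iff : ∀ l ξ r, r ∈ Set.Ico a0 a1 →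
      (r < U l ξ ↔ δ ξ * r ^ 3 < l * (2 * q ξ + 3 * r)) := by
    intro l ξ r hr
    have hr0 := ha0.trans_le hr.1
    refine ⟨fun h => hlt l ξ r _ hr0 h (h0 l ξ (hr.1.trans_lt h)), fun h => ?_⟩
    by_contra! h'
    have hb := h1 l ξ (h'.trans_lt hr.2)
    rcases h'.eq_or_lt with h'' | h''
    · rw [h''] at hb
      exact absurd h (not_lt.2 hb)
    · exact absurd h (hgt l ξ _ r (ha0.trans_le (hU l ξ).1) h'' hb).le.not_gt
  have hlt_iff : ∀ l ξ r, r ∈ Set.Ioc a0 a1 →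
      (U l ξ < r ↔ l * (2 * q ξ + 3 * r) < δ ξ * r ^ 3) := by
    intro l ξ r hr
    refine ⟨fun h => hgt l ξ _ r (ha0.trans_le (hU l ξ).1) h (h1 l ξ (h.trans_le hr.2)),
      fun h => ?_⟩
    by_contra! h'
    have hb := h0 l ξ (hr.1.trans_le h')
    rcases h'.eq_or_lt with h'' | h''
    · rw [← h''] at hb
      exact absurd h (not_lt.2 hb)
    · exact absurd h (hlt l ξ r _ (ha0.trans hr.1) h'' hb).le.not_gt
  refine ⟨U, ?_, fun l ξ => ⟨hU l ξ, fun s hs => ?_, fun hl => ?_, fun hl => ?_⟩⟩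
  · rw [OrderTopology.continuous_iff]
    refine fun r => ⟨?_, ?_⟩
    · rcases lt_or_ge r a0 with hr0 | hr0
      · convert isOpen_univ
        exact Set.eq_univ_of_forall fun z => hr0.trans_le (hU z.1 z.2).1
      rcases lt_or_ge r a1 with hr1 | hr1
      · convert isOpen_lt (f := fun z : ℝ × ℝ => δ z.2 * r ^ 3)
          (g := fun z => z.1 * (2 * q z.2 + 3 * r)) (by fun_prop) (by fun_prop) using 1
        ext z
        exact hgt_iff z.1 z.2 r ⟨hr0, hr1⟩
      · convert isOpen_empty
        exact Set.eq_empty_of_forall_notMem fun z hz =>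
          absurd (Set.mem_Ioi.1 hz) (not_lt.2 ((hU z.1 z.2).2.trans hr1))
    · rcases le_or_gt r a0 with hr0 | hr0
      · convert isOpen_empty
        exact Set.eq_empty_of_forall_notMem fun z hz =>
          absurd (Set.mem_Iio.1 hz) (not_lt.2 (hr0.trans (hU z.1 z.2).1))
      rcases le_or_gt r a1 with hr1 | hr1
      · convert isOpen_lt (f := fun z : ℝ × ℝ => z.1 * (2 * q z.2 + 3 * r))
          (g := fun z => δ z.2 * r ^ 3) (by fun_prop) (by fun_prop) using 1
        ext z
        exact hlt_iff z.1 z.2 r ⟨hr0, hr1⟩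
      · convert isOpen_univ
        exact Set.eq_univ_of_forall fun z => (hU z.1 z.2).2.trans_lt hr1
  · exact multiplier_le ha0 (hδ0 ξ) (hq0 ξ) (hU l ξ) hs (h0 l ξ) (h1 l ξ)
  · subst hl
    by_contra h
    have hb := h0 0 ξ (lt_of_le_of_ne (hU 0 ξ).1 (Ne.symm h))
    have hu := ha0.trans_le (hU 0 ξ).1
    have hδξ := hδ0 ξ
    rw [zero_mul] at hb
    exact absurd hb (not_le.2 (by positivity))
  · by_contra h
    have hb := h1 l ξ (lt_of_le_of_ne (hU l ξ).2 h)
    have hu := ha0.trans_le (hU l ξ).1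
    have hδξ := hδ0 ξ
    have hqξ := hq0 ξ
    have ha1 := ha0.trans_le ha
    have hl0 : 0 < l := lt_of_lt_of_le (mul_pos hδξ (pow_pos ha1 2)) hl
    have h2 : U l ξ ^ 2 ≤ a1 ^ 2 := pow_le_pow_left₀ hu.le (hU l ξ).2 2
    have h3 : δ ξ * U l ξ ^ 2 * U l ξ ≤ l * U l ξ :=
      mul_le_mul_of_nonneg_right ((mul_le_mul_of_nonneg_left h2 hδξ.le).trans hl) hu.le
    nlinarith [mul_pos hl0 hqξ, mul_pos hl0 hu]

open MeasureTheory

lemma integral_le_of_mul_le {T : ℝ} (hT : 0 ≤ T) {g y d h : ℝ → ℝ}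
    (hg : Continuous g) {L : NNReal} (hy : LipschitzOnWith L y (Set.Icc 0 T))
    (hd : ∀ᵐ t ∂(volume.restrict (Set.Ioo 0 T)), HasDerivAt y (d t) t)
    (hh : IntegrableOn h (Set.Ioo 0 T))
    (hle : ∀ᵐ t ∂(volume.restrict (Set.Ioo 0 T)), g (y t) * d t ≤ h t) :
    ∫ ξ in (y 0)..(y T), g ξ ≤ ∫ t in Set.Ioo 0 T, h t := by
  obtain ⟨h1, h2⟩ := setIntegral_comp_mul_deriv_of_lipschitzOnWith hT hg hy hd
  rw [← h2]
  exact integral_mono_ae h1 hh hle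

lemma le_integral_of_le_mul {T : ℝ} (hT : 0 ≤ T) {g y d h : ℝ → ℝ}
    (hg : Continuous g) {L : NNReal} (hy : LipschitzOnWith L y (Set.Icc 0 T))
    (hd : ∀ᵐ t ∂(volume.restrict (Set.Ioo 0 T)), HasDerivAt y (d t) t)
    (hh : IntegrableOn h (Set.Ioo 0 T))
    (hle : ∀ᵐ t ∂(volume.restrict (Set.Ioo 0 T)), h t ≤ g (y t) * d t) :
    ∫ t in Set.Ioo 0 T, h t ≤ ∫ ξ in (y 0)..(y T), g ξ := by
  obtain ⟨h1, h2⟩ := setIntegral_comp_mul_deriv_of_lipschitzOnWith hT hg hy hd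
  rw [← h2]
  exact integral_mono_ae hh h1 hle

lemma integrableOn_running_cost {T a0 a1 : ℝ} (ha0 : 0 < a0) {c y v : ℝ → ℝ} (hc : Continuous c)
    (hy : ContinuousOn y (Set.Icc 0 T)) (hv : Measurable v)
    (hvm : ∀ᵐ t ∂(volume.restrict (Set.Ioo 0 T)), v t ∈ Set.Icc a0 a1) :
    IntegrableOn (fun t => c (y t) * v t ^ 2 + v t ^ 3) (Set.Ioo 0 T) := by
  have hpow : ∀ n : ℕ, ∀ᵐ t ∂(volume.restrict (Set.Ioo 0 T)), ‖v t ^ n‖ ≤ a1 ^ n := by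
    intro n
    filter_upwards [hvm] with t ht
    have := ha0.trans_le ht.1
    rw [Real.norm_of_nonneg (by positivity)]
    exact pow_le_pow_left₀ this.le ht.2 n
  have h1 : IntegrableOn (fun t => c (y t)) (Set.Ioo 0 T) :=
    ((hc.comp_continuousOn hy).integrableOn_Icc).mono_set Set.Ioo_subset_Icc_self
  have h2 : IntegrableOn (fun t => c (y t) * v t ^ 2) (Set.Ioo 0 T) :=
    Integrable.mul_bdd h1 (hv.pow_const 2).aestronglyMeasurable (hpow 2)
  have h3 : IntegrableOn (fun t => v t ^ 3) (Set.Ioo 0 T) :=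
    Measure.integrableOn_of_bounded (by simp) (hv.pow_const 3).aestronglyMeasurable (hpow 3)
  exact h2.add h3

theorem stmt_16
    (T : ℝ) (hT : 0 < T) (x0 : ℝ)
    (a0 a1 : ℝ) (ha0 : 0 < a0) (ha : a0 ≤ a1)
    (c q : ℝ → ℝ)
    (hc : ∃ Lc : NNReal, LipschitzWith Lc c)
    (hq : ∃ Lq : NNReal, LipschitzWith Lq q)
    (hcq : ∀ x : ℝ, c x < q x) (hqpos : ∀ x : ℝ, 0 < q x) :
    ∃ (x : ℝ → ℝ) (u : ℝ → ℝ),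
      (Measurable u ∧ (∀ᵐ t ∂(volume.restrict (Set.Ioo 0 T)), u t ∈ Set.Icc a0 a1) ∧
       (∃ Lx : NNReal, LipschitzOnWith Lx x (Set.Icc 0 T)) ∧ x 0 = x0 ∧
       (∀ᵐ t ∂(volume.restrict (Set.Ioo 0 T)),
          HasDerivAt x (q (x t) * (u t) ^ 2 + (u t) ^ 3) t)) ∧
      ∀ (y : ℝ → ℝ) (v : ℝ → ℝ),
        (Measurable v ∧ (∀ᵐ t ∂(volume.restrict (Set.Ioo 0 T)), v t ∈ Set.Icc a0 a1) ∧
         (∃ Ly : NNReal, LipschitzOnWith Ly y (Set.Icc 0 T)) ∧ y 0 = x0 ∧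
         (∀ᵐ t ∂(volume.restrict (Set.Ioo 0 T)),
            HasDerivAt y (q (y t) * (v t) ^ 2 + (v t) ^ 3) t)) →
        (∫ t in Set.Ioo 0 T, (c (x t) * (u t) ^ 2 + (u t) ^ 3)) ≤
          (∫ t in Set.Ioo 0 T, (c (y t) * (v t) ^ 2 + (v t) ^ 3)) := by
  obtain ⟨Lc, hLc⟩ := hc
  obtain ⟨Lq, hLq⟩ := hq
  have hcc := hLc.continuous
  have hqc := hLq.continuous
  have ha1 : 0 < a1 := ha0.trans_le ha
  have hδc : Continuous fun ξ => q ξ - c ξ := hqc.sub hcc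
  obtain ⟨U, hUc, hU⟩ := exists_feedback ha0 ha hδc hqc (fun ξ => sub_pos.2 (hcq ξ)) hqpos
  have hUpos : ∀ l ξ, 0 < U l ξ := fun l ξ => ha0.trans_le (hU l ξ).1.1
  have hUc' : Continuous fun p : ℝ × ℝ => U p.1 p.2 := hUc
  set A : ℝ := (q x0 + Lq) * a1 ^ 2 + a1 ^ 3 with hAdef
  have hA : 0 < A := by
    have := hqpos x0
    positivity
  have hgrow : ∀ s ∈ Set.Icc a0 a1, ∀ ξ, q ξ * s ^ 2 + s ^ 3 ≤ A * (1 + |ξ - x0|) := by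
    intro s hs ξ
    have hs0 := ha0.trans_le hs.1
    have h1 : q ξ ≤ q x0 + Lq * |ξ - x0| := by
      have h := hLq.dist_le_mul ξ x0
      rw [Real.dist_eq, Real.dist_eq] at h
      linarith [le_abs_self (q ξ - q x0)]
    have h2 : s ^ 2 ≤ a1 ^ 2 := pow_le_pow_left₀ hs0.le hs.2 2
    have h3 : s ^ 3 ≤ a1 ^ 3 := pow_le_pow_left₀ hs0.le hs.2 3
    have h4 : q ξ * s ^ 2 ≤ (q x0 + Lq * |ξ - x0|) * a1 ^ 2 :=
      mul_le_mul h1 h2 (by positivity) ((hqpos ξ).le.trans h1)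
    have h5 : 0 ≤ (q x0 * a1 ^ 2 + Lq * a1 ^ 2 + a1 ^ 3) * |ξ - x0| - Lq * |ξ - x0| * a1 ^ 2
        + Lq * a1 ^ 2 := by
      have := hqpos x0
      have h : 0 ≤ (q x0 * a1 ^ 2 + a1 ^ 3) * |ξ - x0| + Lq * a1 ^ 2 := by positivity
      linarith
    rw [hAdef]
    linarith
  have hfpos : ∀ s, 0 < s → ∀ ξ, 0 < q ξ * s ^ 2 + s ^ 3 := by
    intro s hs ξ
    have := hqpos ξ
    positivity
  set F : ℝ → ℝ → ℝ := fun l ξ => q ξ * U l ξ ^ 2 + U l ξ ^ 3 with hF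
  have hFpos : ∀ l ξ, 0 < F l ξ := fun l ξ => hfpos _ (hUpos l ξ) ξ
  have hFc : Continuous fun p : ℝ × ℝ => F p.1 p.2 := by
    simp only [hF]
    fun_prop
  have hFA : ∀ l ξ, F l ξ ≤ A * (1 + |ξ - x0|) := fun l ξ => hgrow _ (hU l ξ).1 ξ
  have hIc : Continuous fun p : ℝ × ℝ => (F p.1 p.2)⁻¹ := hFc.inv₀ fun p => (hFpos _ _).ne'
  set m : ℝ → ℝ → ℝ := fun l ξ => (c ξ * U l ξ ^ 2 + U l ξ ^ 3 + l) * (F l ξ)⁻¹ with hm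
  have hmc : Continuous fun p : ℝ × ℝ => m p.1 p.2 := by
    simp only [hm]
    refine Continuous.mul ?_ hIc
    fun_prop
  have hsec : ∀ {f : ℝ → ℝ → ℝ}, Continuous (fun p : ℝ × ℝ => f p.1 p.2) → ∀ l,
      Continuous (f l) := fun hf l => hf.comp (Continuous.prodMk_right l)
  have hmle : ∀ l ξ, ∀ s ∈ Set.Icc a0 a1,
      m l ξ * (q ξ * s ^ 2 + s ^ 3) ≤ c ξ * s ^ 2 + s ^ 3 + l := by
    intro l ξ s hs
    have h := (hU l ξ).2.1 s hs
    simp only [hm]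
    rw [mul_right_comm, mul_inv_le_iff₀ (hFpos l ξ)]
    simp only [hF]
    linarith
  have hmeq : ∀ l ξ, m l ξ * F l ξ = c ξ * U l ξ ^ 2 + U l ξ ^ 3 + l := fun l ξ => by
    simp only [hm]
    rw [mul_assoc, inv_mul_cancel₀ (hFpos l ξ).ne', mul_one]
  set Xm : ℝ := x0 + Real.exp (A * T) with hXm
  have hx0Xm : x0 ≤ Xm := by linarith [Real.exp_pos (A * T)]
  obtain ⟨M, hM⟩ := (isCompact_Icc (a := x0) (b := Xm)).bddAbove_image
    (f := fun ξ => (q ξ - c ξ) * a1 ^ 2) (by fun_prop)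
  set Λ : ℝ := max M 0 with hΛ
  have hΛ0 : 0 ≤ Λ := le_max_right _ _
  have hUΛ : ∀ ξ ∈ Set.Icc x0 Xm, U Λ ξ = a1 := fun ξ hξ =>
    (hU Λ ξ).2.2.2 ((hM (Set.mem_image_of_mem _ hξ)).trans (le_max_left _ _))
  have hU0 : ∀ ξ, U 0 ξ = a0 := fun ξ => (hU 0 ξ).2.2.1 rfl
  have hGc : Continuous fun p : ℝ × ℝ => ∫ ξ in x0..p.2, (F p.1 ξ)⁻¹ :=
    intervalIntegral.continuous_parametric_intervalIntegral_of_continuous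
      (f := fun (p : ℝ × ℝ) ξ => (F p.1 ξ)⁻¹)
      (hIc.comp (by fun_prop : Continuous fun z : (ℝ × ℝ) × ℝ => (z.1.1, z.2))) continuous_snd
  have hΨc : Continuous fun p : ℝ × ℝ => (∫ ξ in x0..p.2, m p.1 ξ) - p.1 * T :=
    (intervalIntegral.continuous_parametric_intervalIntegral_of_continuous
      (f := fun (p : ℝ × ℝ) ξ => m p.1 ξ)
      (hmc.comp (by fun_prop : Continuous fun z : (ℝ × ℝ) × ℝ => (z.1.1, z.2)))
      continuous_snd).sub (by fun_prop)
  set S : Set (ℝ × ℝ) := (Set.Icc 0 Λ ×ˢ Set.Icc x0 Xm) ∩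
    {p | ∫ ξ in x0..p.2, (F p.1 ξ)⁻¹ = T} with hS
  have hScomp : IsCompact S :=
    (isCompact_Icc.prod isCompact_Icc).inter_right (isClosed_eq hGc continuous_const)
  have hSne : S.Nonempty := by
    have h1 : T ≤ ∫ ξ in x0..Xm, (F 0 ξ)⁻¹ := le_integral_right_of_inv_le (hsec (f := fun l ξ => (F l ξ)⁻¹) hIc 0) hA
      (fun ξ => inv_anti₀ (hFpos 0 ξ) (hFA 0 ξ)) T
    obtain ⟨X, hX, hXT⟩ := intermediate_value_Icc hx0Xm
      (f := fun X => ∫ ξ in x0..X, (F 0 ξ)⁻¹)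
      (hGc.comp (Continuous.prodMk_right (0 : ℝ))).continuousOn
      (show T ∈ Set.Icc _ _ from ⟨by simpa using hT.le, h1⟩)
    exact ⟨(0, X), ⟨⟨le_rfl, hΛ0⟩, hX⟩, hXT⟩
  obtain ⟨⟨l, X⟩, ⟨-, hlXT⟩, hmin⟩ := hScomp.exists_isMinOn hSne hΨc.continuousOn
  have hconst : ∀ r : ℝ, ∫ _ in Set.Ioo 0 T, r = r * T := fun r => by
    simp [hT.le, mul_comm]
  have hconst_int : ∀ r : ℝ, IntegrableOn (fun _ => r) (Set.Ioo 0 T) := fun r => by simp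
  obtain ⟨x, hx0, hxd, hxX⟩ := exists_solution_of_pos (hsec hFc l) (hFpos l) hA (hFA l)
  have hxc : Continuous x := continuous_iff_continuousAt.2 fun t => (hxd t).continuousAt
  have hxT : x T = X := hxX T X hlXT
  have hxlip : ∃ Lx : NNReal, LipschitzOnWith Lx x (Set.Icc 0 T) := by
    have : ContDiff ℝ 1 x := by
      rw [contDiff_one_iff_deriv]
      refine ⟨fun t => (hxd t).differentiableAt, ?_⟩
      rw [show deriv x = fun t => F l (x t) from funext fun t => (hxd t).deriv]
      exact (hsec hFc l).comp hxc
    exact this.locallyLipschitz.locallyLipschitzOn.exists_lipschitzOnWith_of_compact isCompact_Icc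
  have hum : Measurable fun t => U l (x t) := ((hsec hUc' l).comp hxc).measurable
  refine ⟨x, fun t => U l (x t), ⟨hum, ae_of_all _ fun t => (hU l (x t)).1, hxlip, hx0,
    ae_of_all _ hxd⟩, ?_⟩
  rintro y v ⟨hv, hvm, ⟨Ly, hy⟩, hy0, hyd⟩
  obtain ⟨Lx, hxL⟩ := hxlip
  have hxcost : ∫ t in Set.Ioo 0 T, (c (x t) * U l (x t) ^ 2 + U l (x t) ^ 3) =
      (∫ ξ in x0..X, m l ξ) - l * T := by
    have h := (setIntegral_comp_mul_deriv_of_lipschitzOnWith hT.le (hsec hmc l) hxL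
      (ae_of_all _ hxd)).2
    rw [hx0, hxT] at h
    rw [← h]
    simp only [hmeq]
    rw [integral_add (integrableOn_running_cost ha0 hcc hxc.continuousOn hum
      (ae_of_all _ fun t => (hU l (x t)).1)) (hconst_int l), hconst]
    ring
  have hycost_int := integrableOn_running_cost ha0 hcc hy.continuousOn hv hvm
  have hX0 : x0 ≤ y T := by
    have h := le_integral_of_le_mul hT.le (continuous_const (y := (1 : ℝ))) hy hyd (hconst_int 0)
      (by
        filter_upwards [hvm] with t ht
        rw [one_mul]
        exact (hfpos _ (ha0.trans_le ht.1) _).le)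
    rw [hconst, hy0] at h
    simp at h
    linarith
  have hXXm : y T ≤ Xm := by
    have hpos : ∀ ξ : ℝ, 0 < A * (1 + |ξ - x0|) := fun ξ => by positivity
    have hgc : Continuous fun ξ : ℝ => (A * (1 + |ξ - x0|))⁻¹ :=
      Continuous.inv₀ (by fun_prop) fun ξ => (hpos ξ).ne'
    have h := integral_le_of_mul_le hT.le hgc hy hyd (hconst_int 1) (by
        filter_upwards [hvm] with t ht
        rw [inv_mul_le_iff₀ (hpos _), mul_one]
        exact hgrow _ ht _)
    rw [hconst, hy0, one_mul] at h
    by_contra! hlt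
    have h1 := strictMono_integral_of_pos hgc (fun ξ => inv_pos.2 (hpos ξ)) x0 hlt
    have h2 := le_integral_right_of_inv_le hgc hA (fun _ => le_rfl) T
    exact absurd (h2.trans_lt h1) (not_lt.2 h)
  have hG0 : T ≤ ∫ ξ in x0..(y T), (F 0 ξ)⁻¹ := by
    have h := le_integral_of_le_mul hT.le (hsec (f := fun l ξ => (F l ξ)⁻¹) hIc 0) hy hyd (hconst_int 1) (by
        filter_upwards [hvm] with t ht
        rw [le_inv_mul_iff₀ (hFpos _ _), mul_one]
        simp only [hF, hU0]
        have := hqpos (y t)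
        have := ht.1
        gcongr)
    rwa [hconst, hy0, one_mul] at h
  have hGΛ : ∫ ξ in x0..(y T), (F Λ ξ)⁻¹ ≤ T := by
    have hgc : Continuous fun ξ : ℝ => (q ξ * a1 ^ 2 + a1 ^ 3)⁻¹ :=
      Continuous.inv₀ (by fun_prop) fun ξ => (hfpos a1 ha1 ξ).ne'
    have h := integral_le_of_mul_le hT.le hgc hy hyd (hconst_int 1) (by
        filter_upwards [hvm] with t ht
        rw [inv_mul_le_iff₀ (hfpos a1 ha1 _), mul_one]
        have := hqpos (y t)
        have := ha0.trans_le ht.1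
        have := ht.2
        gcongr)
    rw [hconst, hy0, one_mul] at h
    refine le_trans (le_of_eq ?_) h
    refine intervalIntegral.integral_congr fun ξ hξ => ?_
    rw [Set.uIcc_of_le hX0] at hξ
    simp only [hF, hUΛ ξ ⟨hξ.1, hξ.2.trans hXXm⟩]
  obtain ⟨l', hl', hl'T⟩ := intermediate_value_Icc' hΛ0
    (f := fun l => ∫ ξ in x0..(y T), (F l ξ)⁻¹)
    (hGc.comp (Continuous.prodMk_left (y T))).continuousOn
    (show T ∈ Set.Icc _ _ from ⟨hGΛ, hG0⟩)
  have hmin' := isMinOn_iff.1 hmin (l', y T) ⟨⟨hl', hX0, hXXm⟩, hl'T⟩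
  have hycost := integral_le_of_mul_le hT.le (hsec hmc l') hy hyd (hycost_int.add (hconst_int l'))
    (by
      filter_upwards [hvm] with t ht
      exact hmle l' (y t) (v t) ht)
  simp only [Pi.add_apply] at hycost
  rw [integral_add hycost_int (hconst_int l'), hconst, hy0] at hycost
  rw [hxcost]
  simp only at hmin'
  linarith
end

section
/- Let T > 0, x0 ∈ ℝ, K = [1,2], and let c, β : ℝ → ℝ be Lipschitz functions satisfying β(x) < min{0, c(x)} for every x ∈ ℝ. Then the optimal control problem 'minimize ∫₀ᵀ [c(x(t)) u(t)² + u(t)³] dt over admissible pairs for the state equation x′(t) = (c(x(t)) − β(x(t))) u(t)² + u(t)³' admits at least one solution. -/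
open MeasureTheory

open Set Filter Topology

/-- An absolutely continuous function whose derivative is a.e. at least `m` grows at rate at
least `m`. -/
lemma AbsolutelyContinuousOnInterval.mul_sub_le_of_ae_hasDerivAt {f : ℝ → ℝ} {a b m : ℝ}
    (hab : a ≤ b) (hf : AbsolutelyContinuousOnInterval f a b)
    (h : ∀ᵐ t, t ∈ Ioo a b → ∃ d, HasDerivAt f d t ∧ m ≤ d) :
    m * (b - a) ≤ f b - f a := by
  rw [← hf.integral_deriv_eq_sub]
  have h1 : ∫ _ in a..b, m = m * (b - a) := by simp [mul_comm]
  rw [← h1]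
  refine intervalIntegral.integral_mono_ae_restrict hab (by simp) hf.intervalIntegrable_deriv ?_
  rw [EventuallyLE, ← restrict_Ioo_eq_restrict_Icc, ae_restrict_iff' measurableSet_Ioo]
  filter_upwards [h] with t ht hts
  obtain ⟨d, hd, hm⟩ := ht hts
  rwa [hd.deriv]

/-- An absolutely continuous function whose derivative is a.e. at most `m` in absolute value
is `m`-Lipschitz. -/
lemma AbsolutelyContinuousOnInterval.lipschitzOnWith_of_ae_hasDerivAt {f : ℝ → ℝ} {a b : ℝ}
    {m : NNReal} (hab : a ≤ b) (hf : AbsolutelyContinuousOnInterval f a b)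
    (h : ∀ᵐ t, t ∈ Ioo a b → ∃ d, HasDerivAt f d t ∧ |d| ≤ m) :
    LipschitzOnWith m f (Icc a b) := by
  have key : ∀ s ∈ Icc a b, ∀ t ∈ Icc a b, s ≤ t → |f t - f s| ≤ m * (t - s) := by
    intro s hs t ht hst
    have hsub : uIcc s t ⊆ uIcc a b := by
      rw [uIcc_of_le hst, uIcc_of_le hab]; exact Icc_subset_Icc hs.1 ht.2
    have h1 := (hf.mono hsub).mul_sub_le_of_ae_hasDerivAt (m := -m) hst (by
      filter_upwards [h] with r hr hrs
      obtain ⟨d, hd, hm⟩ := hr ⟨hs.1.trans_lt hrs.1, hrs.2.trans_le ht.2⟩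
      exact ⟨d, hd, (abs_le.1 hm).1⟩)
    have h2 := (hf.mono hsub).neg.mul_sub_le_of_ae_hasDerivAt (m := -m) hst (by
      filter_upwards [h] with r hr hrs
      obtain ⟨d, hd, hm⟩ := hr ⟨hs.1.trans_lt hrs.1, hrs.2.trans_le ht.2⟩
      exact ⟨-d, hd.neg, by linarith [(abs_le.1 hm).2]⟩)
    simp only [Pi.neg_apply] at h2
    rw [abs_le]; constructor <;> linarith
  refine LipschitzOnWith.of_dist_le_mul fun s hs t ht => ?_
  rw [Real.dist_eq, Real.dist_eq]
  rcases le_total s t with hst | hst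
  · rw [abs_sub_comm, abs_sub_comm s, abs_of_nonneg (sub_nonneg.2 hst)]
    exact key s hs t ht hst
  · rw [abs_of_nonneg (sub_nonneg.2 hst)]
    exact key t ht s hs hst

/-- A Grönwall estimate for Lipschitz functions satisfying a linear growth condition a.e. -/
lemma LipschitzOnWith.sq_sub_le_of_ae_growth {x : ℝ → ℝ} {x0 T M K : ℝ} {C : NNReal} (hK : 0 ≤ K)
    (hx : LipschitzOnWith C x (Icc 0 T)) (h0 : x 0 = x0)
    (h : ∀ᵐ t, t ∈ Ioo 0 T → ∃ d, HasDerivAt x d t ∧ |d| ≤ M + K * |x t - x0|) :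
    ∀ t ∈ Icc 0 T, (x t - x0) ^ 2 ≤ M ^ 2 * Real.exp ((2 * K + 1) * T) := by
  intro t ht
  have hT : 0 ≤ T := ht.1.trans ht.2
  have hac : AbsolutelyContinuousOnInterval x 0 t := by
    apply LipschitzOnWith.absolutelyContinuousOnInterval (K := C)
    rw [uIcc_of_le ht.1]; exact hx.mono (Icc_subset_Icc_right ht.2)
  have hc : ∀ r : ℝ, AbsolutelyContinuousOnInterval (fun _ : ℝ => r) 0 t := fun r =>
    ((LipschitzWith.const r).lipschitzOnWith).absolutelyContinuousOnInterval
  have hd := hac.sub (hc x0)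
  have he : AbsolutelyContinuousOnInterval (fun s => Real.exp (-((2 * K + 1) * s))) 0 t :=
    ContDiffOn.absolutelyContinuousOnInterval (by fun_prop)
  have hac2 := (((hd.mul hd).add (hc (M ^ 2))).mul he).neg
  have := hac2.mul_sub_le_of_ae_hasDerivAt (m := 0) ht.1 (by
    filter_upwards [h] with s hs hst
    obtain ⟨d, hd, hM⟩ := hs ⟨hst.1, hst.2.trans_le ht.2⟩
    have e1 : HasDerivAt (fun s => Real.exp (-((2 * K + 1) * s)))
        (Real.exp (-((2 * K + 1) * s)) * (-((2 * K + 1) * 1))) s :=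
      (((hasDerivAt_id s).const_mul _).neg).exp
    have e2 := ((((hd.sub (hasDerivAt_const s x0)).mul
      (hd.sub (hasDerivAt_const s x0))).add (hasDerivAt_const s (M ^ 2))).mul e1).neg
    refine ⟨_, e2, ?_⟩
    simp only [Pi.sub_apply, Pi.mul_apply, Pi.add_apply]
    have h1 : d * (x s - x0) ≤ (M + K * |x s - x0|) * |x s - x0| := by
      calc d * (x s - x0) ≤ |d * (x s - x0)| := le_abs_self _
        _ = |d| * |x s - x0| := abs_mul _ _
        _ ≤ _ := by gcongr
    have h2 := sq_abs (x s - x0)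
    have h3 : 0 ≤ (2 * K + 1) * ((x s - x0) * (x s - x0) + M ^ 2) - 2 * (d * (x s - x0)) := by
      nlinarith [sq_nonneg (M - |x s - x0|), mul_nonneg hK (sq_nonneg M)]
    have := mul_nonneg h3 (Real.exp_pos (-((2 * K + 1) * s))).le
    linarith)
  simp only [Pi.neg_apply, Pi.mul_apply, Pi.add_apply, Pi.sub_apply, h0] at this
  simp only [sub_self, mul_zero, neg_zero, Real.exp_zero, zero_add, mul_one, zero_mul] at this
  have h4 : ((x t - x0) * (x t - x0) + M ^ 2) ≤ M ^ 2 * Real.exp ((2 * K + 1) * t) := by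
    rw [Real.exp_neg, ← div_eq_mul_inv] at this
    rw [← div_le_iff₀ (Real.exp_pos _)]
    linarith
  have h5 : Real.exp ((2 * K + 1) * t) ≤ Real.exp ((2 * K + 1) * T) := by
    gcongr; exact ht.2
  nlinarith [sq_nonneg M]

/-- Lower bounds on derivatives pass to pointwise limits at points of differentiability. -/
lemma le_of_hasDerivAt_of_tendsto {f : ℕ → ℝ → ℝ} {g : ℝ → ℝ} {T t d m : ℝ}
    (hac : ∀ n, AbsolutelyContinuousOnInterval (f n) 0 T)
    (hlim : ∀ s ∈ Icc 0 T, Tendsto (fun n => f n s) atTop (𝓝 (g s)))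
    (ht : t ∈ Ioo 0 T) (hg : HasDerivAt g d t)
    (h : ∀ ε > 0, ∃ δ > 0, ∀ᶠ n in atTop, ∀ᵐ s, s ∈ Ioo 0 T → |s - t| < δ →
      ∃ e, HasDerivAt (f n) e s ∧ m - ε ≤ e) :
    m ≤ d := by
  refine le_of_forall_pos_sub_le fun ε hε => ?_
  obtain ⟨δ, hδ, hev⟩ := h ε hε
  have hslope := (hasDerivAt_iff_tendsto_slope.1 hg).mono_left
    (nhdsWithin_mono t (fun s (hs : t < s) => ne_of_gt hs) : 𝓝[>] t ≤ 𝓝[≠] t)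
  refine ge_of_tendsto hslope ?_
  have hmem : Ioo t (min T (t + δ)) ∈ 𝓝[>] t :=
    Ioo_mem_nhdsGT (lt_min ht.2 (by linarith))
  filter_upwards [hmem] with s hs
  have hsT := hs.2.trans_le (min_le_left _ _)
  have hsδ := hs.2.trans_le (min_le_right _ _)
  rw [slope_def_field, le_div_iff₀ (sub_pos.2 hs.1)]
  refine ge_of_tendsto ((hlim s ⟨(ht.1.trans hs.1).le, hsT.le⟩).sub
    (hlim t ⟨ht.1.le, ht.2.le⟩)) ?_
  filter_upwards [hev] with n hn
  refine AbsolutelyContinuousOnInterval.mul_sub_le_of_ae_hasDerivAt hs.1.le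
    ((hac n).mono ?_) ?_
  · rw [uIcc_of_le hs.1.le, uIcc_of_le (ht.1.trans ht.2).le]
    exact Icc_subset_Icc ht.1.le hsT.le
  · filter_upwards [hn] with r hr hrs
    refine hr ⟨ht.1.trans hrs.1, hrs.2.trans hsT⟩ ?_
    rw [abs_of_pos (sub_pos.2 hrs.1)]; linarith [hrs.2]

/-- Arzelà–Ascoli for uniformly Lipschitz functions on an interval. -/
lemma exists_subseq_tendstoUniformlyOn_of_lipschitzOnWith {f : ℕ → ℝ → ℝ} {T x0 : ℝ} {C : NNReal}
    (hT : 0 ≤ T) (hf : ∀ n, LipschitzOnWith C (f n) (Icc 0 T)) (h0 : ∀ n, f n 0 = x0) :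
    ∃ (φ : ℕ → ℕ) (g : ℝ → ℝ), StrictMono φ ∧ Continuous g ∧ LipschitzOnWith C g (Icc 0 T) ∧
      g 0 = x0 ∧ TendstoUniformlyOn (fun n => f (φ n)) g atTop (Icc 0 T) := by
  have h0mem : (0 : ℝ) ∈ Icc 0 T := ⟨le_rfl, hT⟩
  have hlip : ∀ n, LipschitzWith C ((Icc (0 : ℝ) T).domRestrict (f n)) := fun n =>
    lipschitzOnWith_iff_restrict.1 (hf n)
  let F : ℕ → BoundedContinuousFunction (Icc (0 : ℝ) T) ℝ := fun n =>
    BoundedContinuousFunction.mkOfCompact ⟨_, (hlip n).continuous⟩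
  have hcomp := BoundedContinuousFunction.arzela_ascoli (Icc (x0 - C * T) (x0 + C * T))
    isCompact_Icc (Set.range F) (by
      rintro _ ⟨t, ht⟩ ⟨n, rfl⟩
      have h := (hf n).dist_le_mul t ht 0 h0mem
      rw [Real.dist_eq, Real.dist_eq, sub_zero, abs_of_nonneg ht.1, h0 n] at h
      have h1 : (C : ℝ) * t ≤ C * T := by gcongr; exact ht.2
      have h2 := abs_le.1 (h.trans h1)
      change f n t ∈ _
      constructor <;> linarith) (by
      refine (LipschitzWith.uniformEquicontinuous (K := C) _ ?_).equicontinuous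
      rintro ⟨_, n, rfl⟩
      exact hlip n)
  obtain ⟨G, -, φ, hφ, hG⟩ := hcomp.tendsto_subseq (x := F) fun n => subset_closure ⟨n, rfl⟩
  have hunif := BoundedContinuousFunction.tendsto_iff_tendstoUniformly.1 hG
  have hGeq : (Icc (0 : ℝ) T).domRestrict (IccExtend hT G) = G := funext fun t => IccExtend_val hT G t
  have hU : TendstoUniformlyOn (fun n => f (φ n)) (IccExtend hT G) atTop (Icc 0 T) := by
    rw [tendstoUniformlyOn_iff_tendstoUniformly_comp_coe]
    change TendstoUniformly _ ((Icc (0 : ℝ) T).domRestrict (IccExtend hT G)) _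
    rw [hGeq]
    exact hunif
  refine ⟨φ, IccExtend hT G, hφ, G.continuous.Icc_extend', ?_, ?_, hU⟩
  · refine LipschitzOnWith.of_dist_le_mul fun s hs t ht => ?_
    exact le_of_tendsto ((hU.tendsto_at hs).dist (hU.tendsto_at ht))
      (Eventually.of_forall fun n => (hf (φ n)).dist_le_mul s hs t ht)
  · exact tendsto_nhds_unique (hU.tendsto_at h0mem) (by simp [h0])

/-- Measurable selection of the inverse of a family of increasing functions on `[1, 2]`. -/
lemma exists_measurable_selection {f : ℝ → ℝ → ℝ} (hf : Continuous ↿f)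
    (hmono : ∀ x, StrictMonoOn (f x) (Icc 1 2)) {X v : ℝ → ℝ} (hX : Measurable X)
    (hv : Measurable v) :
    ∃ u : ℝ → ℝ, Measurable u ∧ (∀ t, u t ∈ Icc (1 : ℝ) 2) ∧
      ∀ t, v t ∈ Icc (f (X t) 1) (f (X t) 2) → f (X t) (u t) = v t := by
  have hsel : ∀ t, ∃ r ∈ Icc (1 : ℝ) 2, (v t ∈ Icc (f (X t) 1) (f (X t) 2) → f (X t) r = v t) ∧
      (v t ∉ Icc (f (X t) 1) (f (X t) 2) → r = 1) := by
    intro t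
    by_cases h : v t ∈ Icc (f (X t) 1) (f (X t) 2)
    · have hc : ContinuousOn (f (X t)) (Icc 1 2) :=
        (hf.comp (Continuous.prodMk_right (X t))).continuousOn
      obtain ⟨r, hr, hr'⟩ := intermediate_value_Icc (by norm_num) hc h
      exact ⟨r, hr, fun _ => hr', fun h' => absurd h h'⟩
    · exact ⟨1, by simp, fun h' => absurd h' h, fun _ => rfl⟩
  choose u hu1 hu2 hu3 using hsel
  have hfm : ∀ r, Measurable fun t => f (X t) r := fun r =>
    (hf.comp (Continuous.prodMk_left r)).measurable.comp hX
  refine ⟨u, measurable_of_Iic fun r => ?_, hu1, hu2⟩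
  rcases lt_or_ge r 1 with hr1 | hr1
  · convert MeasurableSet.empty
    ext t
    simpa using hr1.trans_le (hu1 t).1
  rcases lt_or_ge 2 r with hr2 | hr2
  · convert MeasurableSet.univ
    ext t
    simpa using (hu1 t).2.trans hr2.le
  have hG : MeasurableSet {t | v t ∈ Icc (f (X t) 1) (f (X t) 2)} :=
    (measurableSet_le (hfm 1) hv).inter (measurableSet_le hv (hfm 2))
  convert hG.compl.union (measurableSet_le hv (hfm r))
  ext t
  simp only [mem_preimage, mem_Iic, mem_union, mem_compl_iff, mem_ofPred_eq]
  by_cases h : v t ∈ Icc (f (X t) 1) (f (X t) 2)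
  · simp only [h, not_true_eq_false, false_or]
    rw [← hu2 t h, (hmono (X t)).le_iff_le (hu1 t) ⟨hr1, hr2⟩]
  · simp [h, hu3 t h, hr1]

/-- `x` is a Lipschitz trajectory of `x' = f x u` on `[0, T]` starting at `x0`, driven by the
`[1, 2]`-valued control `u`. -/
def IsAdmissiblePair (f : ℝ → ℝ → ℝ) (T x0 : ℝ) (x u : ℝ → ℝ) : Prop :=
  Measurable u ∧ (∀ᵐ t ∂(volume.restrict (Set.Ioo 0 T)), u t ∈ Set.Icc (1 : ℝ) 2) ∧
    (∃ Lx : NNReal, LipschitzOnWith Lx x (Set.Icc 0 T)) ∧ x 0 = x0 ∧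
    (∀ᵐ t ∂(volume.restrict (Set.Ioo 0 T)), HasDerivAt x (f (x t) (u t)) t)

lemma integrableOn_comp_control {L : ℝ → ℝ → ℝ} (hL : Continuous ↿L) {T : ℝ} {x u : ℝ → ℝ}
    (hx : ContinuousOn x (Icc 0 T)) (hu : Measurable u)
    (hu' : ∀ᵐ t ∂(volume.restrict (Ioo 0 T)), u t ∈ Icc (1 : ℝ) 2) :
    IntegrableOn (fun t => L (x t) (u t)) (Ioo 0 T) := by
  obtain ⟨C, hC⟩ := ((isCompact_Icc.image_of_continuousOn hx).prod
    (isCompact_Icc (a := (1 : ℝ)) (b := 2))).exists_bound_of_continuousOn hL.continuousOn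
  have hxm : AEMeasurable x (volume.restrict (Ioo 0 T)) :=
    (hx.mono Ioo_subset_Icc_self).aemeasurable measurableSet_Ioo
  refine Integrable.of_bound
    (hL.measurable.comp_aemeasurable (hxm.prodMk hu.aemeasurable)).aestronglyMeasurable C ?_
  filter_upwards [hu', ae_restrict_mem measurableSet_Ioo] with t ht htm
  exact hC (x t, u t) ⟨mem_image_of_mem _ (Ioo_subset_Icc_self htm), ht⟩

/-- Linear growth in the state, uniformly over controls in `[1, 2]`. -/
lemma exists_growth_bound {f : ℝ → ℝ → ℝ} (hf : Continuous ↿f) {K : NNReal}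
    (hlip : ∀ w ∈ Icc (1 : ℝ) 2, LipschitzWith K fun ξ => f ξ w) (x0 : ℝ) :
    ∃ M : ℝ, ∀ w ∈ Icc (1 : ℝ) 2, ∀ ξ, |f ξ w| ≤ M + K * |ξ - x0| := by
  obtain ⟨M, hM⟩ := (isCompact_Icc (a := (1 : ℝ)) (b := 2)).exists_bound_of_continuousOn
    (hf.comp (Continuous.prodMk_right x0)).continuousOn
  refine ⟨M, fun w hw ξ => ?_⟩
  have h1 : |f x0 w| ≤ M := hM w hw
  have h2 := (hlip w hw).dist_le_mul ξ x0
  rw [Real.dist_eq, Real.dist_eq] at h2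
  have h3 := abs_sub_abs_le_abs_sub (f ξ w) (f x0 w)
  linarith

/-- The constant control `1` is admissible. -/
lemma exists_isAdmissiblePair {f : ℝ → ℝ → ℝ} (hf : Continuous ↿f) {K : NNReal}
    (hlip : ∀ w ∈ Icc (1 : ℝ) 2, LipschitzWith K fun ξ => f ξ w) {T : ℝ} (hT : 0 ≤ T) (x0 : ℝ) :
    ∃ x u, IsAdmissiblePair f T x0 x u := by
  have h1 : (1 : ℝ) ∈ Icc (1 : ℝ) 2 := by simp
  obtain ⟨M, hM⟩ := exists_growth_bound hf hlip x0
  obtain ⟨R, hR⟩ : ∃ R, R = √(M ^ 2 * Real.exp ((2 * K + 1) * T)) := ⟨_, rfl⟩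
  have hR0 : 0 ≤ R := hR ▸ Real.sqrt_nonneg _
  have hRle : x0 - R ≤ x0 + R := by linarith
  let p : ℝ → ℝ := fun ξ => projIcc (x0 - R) (x0 + R) hRle ξ
  have hp : LipschitzWith 1 p := LipschitzWith.subtype_val _ |>.comp (LipschitzWith.projIcc hRle)
    |>.weaken (by simp)
  have hp0 : p x0 = x0 := congrArg Subtype.val
    (projIcc_of_mem hRle (x := x0) ⟨by linarith, by linarith⟩)
  have hpd : ∀ ξ, |p ξ - x0| ≤ |ξ - x0| := fun ξ => by
    simpa [hp0, Real.dist_eq] using hp.dist_le_mul ξ x0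
  let g : ℝ → ℝ := fun ξ => f (p ξ) 1
  have hg : LipschitzWith K g := ((hlip 1 h1).comp hp).weaken (by simp)
  obtain ⟨N, hN⟩ := (isCompact_Icc (a := x0 - R) (b := x0 + R)).exists_bound_of_continuousOn
    (hf.comp (Continuous.prodMk_left 1)).continuousOn
  have hgN : ∀ ξ, ‖g ξ‖ ≤ N := fun ξ => hN (p ξ) (projIcc (x0 - R) (x0 + R) hRle ξ).2
  have hN0 : 0 ≤ N := (norm_nonneg _).trans (hgN 0)
  obtain ⟨x, hx0, hx⟩ := (IsPicardLindelof.of_time_independent (f := g) (tmin := 0) (tmax := T)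
    (t₀ := ⟨0, le_rfl, hT⟩) (x₀ := x0) (a := ⟨N * T, by positivity⟩) (r := 0) (L := ⟨N, hN0⟩)
    (K := K) (fun ξ _ => hgN ξ) hg.lipschitzOnWith
      (by
        rw [sub_zero, sub_self, max_eq_left hT, NNReal.coe_zero, sub_zero]
        exact le_rfl)).exists_eq_forall_mem_Icc_hasDerivWithinAt₀
  have hxd : ∀ t ∈ Ioo 0 T, HasDerivAt x (g (x t)) t := fun t ht =>
    (hx t (Ioo_subset_Icc_self ht)).hasDerivAt (Icc_mem_nhds ht.1 ht.2)
  have hxl : LipschitzOnWith ⟨N, hN0⟩ x (Icc 0 T) :=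
    (convex_Icc 0 T).lipschitzOnWith_of_nnnorm_hasDerivWithin_le hx fun t _ => hgN (x t)
  have hbound := hxl.sq_sub_le_of_ae_growth (M := M) K.coe_nonneg hx0 (ae_of_all _ fun t ht =>
    ⟨_, hxd t ht, (hM 1 h1 _).trans (by have := hpd (x t); gcongr)⟩)
  refine ⟨x, fun _ => 1, measurable_const, ae_of_all _ fun _ => h1, ⟨_, hxl⟩, hx0, ?_⟩
  filter_upwards [ae_restrict_mem measurableSet_Ioo] with t ht
  have h2 := abs_le.1 (Real.abs_le_sqrt (hbound t (Ioo_subset_Icc_self ht)))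
  rw [← hR] at h2
  have h3 : p (x t) = x t := congrArg Subtype.val
    (projIcc_of_mem hRle (x := x t) ⟨by linarith, by linarith⟩)
  simpa [g, h3] using hxd t ht

/-- Admissible trajectories and their running costs satisfy a common Lipschitz bound. -/
lemma exists_lipschitz_bound {f L : ℝ → ℝ → ℝ} (hf : Continuous ↿f) (hL : Continuous ↿L)
    {K : NNReal} (hlip : ∀ w ∈ Icc (1 : ℝ) 2, LipschitzWith K fun ξ => f ξ w)
    {T : ℝ} (hT : 0 ≤ T) (x0 : ℝ) :
    ∃ C : NNReal, ∀ x u, IsAdmissiblePair f T x0 x u → LipschitzOnWith C x (Icc 0 T) ∧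
      ∃ z : ℝ → ℝ, LipschitzOnWith C z (Icc 0 T) ∧ z 0 = 0 ∧
        z T = ∫ t in Ioo 0 T, L (x t) (u t) ∧
        ∀ᵐ t, t ∈ Ioo 0 T → HasDerivAt z (L (x t) (u t)) t := by
  obtain ⟨M, hM⟩ := exists_growth_bound hf hlip x0
  obtain ⟨R, hR⟩ : ∃ R, R = √(M ^ 2 * Real.exp ((2 * K + 1) * T)) := ⟨_, rfl⟩
  have hcpt := (isCompact_Icc (a := x0 - R) (b := x0 + R)).prod
    (isCompact_Icc (a := (1 : ℝ)) (b := 2))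
  obtain ⟨C₁, hC₁⟩ := hcpt.exists_bound_of_continuousOn hf.continuousOn
  obtain ⟨C₂, hC₂⟩ := hcpt.exists_bound_of_continuousOn hL.continuousOn
  let C : NNReal := (max C₁ C₂).toNNReal
  have hCle : max C₁ C₂ ≤ C := Real.le_coe_toNNReal _
  refine ⟨C, ?_⟩
  rintro x u ⟨hum, hu, ⟨Lx, hLx⟩, hx0, hx⟩
  have hint := integrableOn_comp_control hL hLx.continuousOn hum hu
  rw [ae_restrict_iff' measurableSet_Ioo] at hu hx
  have hbound := hLx.sq_sub_le_of_ae_growth (M := M) K.coe_nonneg hx0 (by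
    filter_upwards [hu, hx] with t ht1 ht2 ht
    exact ⟨_, ht2 ht, hM _ (ht1 ht) _⟩)
  have hmem : ∀ᵐ t, t ∈ Ioo 0 T → (x t, u t) ∈ Icc (x0 - R) (x0 + R) ×ˢ Icc (1 : ℝ) 2 := by
    filter_upwards [hu] with t ht1 ht
    have h2 := abs_le.1 (Real.abs_le_sqrt (hbound t (Ioo_subset_Icc_self ht)))
    rw [← hR] at h2
    exact ⟨⟨by linarith, by linarith⟩, ht1 ht⟩
  have hii : IntervalIntegrable (fun t => L (x t) (u t)) volume 0 T := by
    rwa [intervalIntegrable_iff_integrableOn_Ioo_of_le hT]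
  have hzd : ∀ᵐ t, t ∈ Ioo 0 T →
      HasDerivAt (fun s => ∫ r in (0 : ℝ)..s, L (x r) (u r)) (L (x t) (u t)) t := by
    filter_upwards [hii.ae_hasDerivAt_integral] with t ht htm
    refine ht ?_ 0 left_mem_uIcc
    rw [uIcc_of_le hT]; exact Ioo_subset_Icc_self htm
  refine ⟨?_, fun s => ∫ r in (0 : ℝ)..s, L (x r) (u r), ?_, by simp, ?_, hzd⟩
  · refine AbsolutelyContinuousOnInterval.lipschitzOnWith_of_ae_hasDerivAt hT
      (LipschitzOnWith.absolutelyContinuousOnInterval (by rwa [uIcc_of_le hT])) ?_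
    filter_upwards [hx, hmem] with t ht1 ht2 ht
    exact ⟨_, ht1 ht, (hC₁ _ (ht2 ht)).trans ((le_max_left _ _).trans hCle)⟩
  · refine AbsolutelyContinuousOnInterval.lipschitzOnWith_of_ae_hasDerivAt hT
      (hii.absolutelyContinuousOnInterval_intervalIntegral left_mem_uIcc) ?_
    filter_upwards [hzd, hmem] with t ht1 ht2 ht
    exact ⟨_, ht1 ht, (hC₂ _ (ht2 ht)).trans ((le_max_right _ _).trans hCle)⟩
  · change ∫ r in (0 : ℝ)..T, L (x r) (u r) = _
    rw [intervalIntegral.integral_of_le hT, integral_Ioc_eq_integral_Ioo]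

/-- Affine inequalities satisfied by all velocities `(f ξ w, L ξ w)` at `ξ = x t` are inherited
by the derivative of a uniform limit of trajectories and running costs. -/
lemma le_add_of_tendstoUniformlyOn {f L : ℝ → ℝ → ℝ} (hf : Continuous ↿f) (hL : Continuous ↿L)
    {xs zs us : ℕ → ℝ → ℝ} {x z : ℝ → ℝ} {T t dx dz p q m : ℝ} {C : NNReal} (hT : 0 ≤ T)
    (hxl : ∀ n, LipschitzOnWith C (xs n) (Icc 0 T)) (hzl : ∀ n, LipschitzOnWith C (zs n) (Icc 0 T))
    (hu : ∀ n, ∀ᵐ t, t ∈ Ioo 0 T → us n t ∈ Icc (1 : ℝ) 2)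
    (hxd : ∀ n, ∀ᵐ t, t ∈ Ioo 0 T → HasDerivAt (xs n) (f (xs n t) (us n t)) t)
    (hzd : ∀ n, ∀ᵐ t, t ∈ Ioo 0 T → HasDerivAt (zs n) (L (xs n t) (us n t)) t)
    (hx : TendstoUniformlyOn xs x atTop (Icc 0 T)) (hz : TendstoUniformlyOn zs z atTop (Icc 0 T))
    (ht : t ∈ Ioo 0 T) (hdx : HasDerivAt x dx t) (hdz : HasDerivAt z dz t)
    (hm : ∀ w ∈ Icc (1 : ℝ) 2, m ≤ p * f (x t) w + q * L (x t) w) :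
    m ≤ p * dx + q * dz := by
  have hac : ∀ {y : ℝ → ℝ}, LipschitzOnWith C y (Icc 0 T) →
      AbsolutelyContinuousOnInterval y 0 T := fun h =>
    LipschitzOnWith.absolutelyContinuousOnInterval (by rwa [uIcc_of_le hT])
  refine le_of_hasDerivAt_of_tendsto (f := fun n s => p * xs n s + q * zs n s)
    (fun n => ((hac (hxl n)).const_mul p).add ((hac (hzl n)).const_mul q))
    (fun s hs => ((hx.tendsto_at hs).const_mul p).add ((hz.tendsto_at hs).const_mul q))
    ht ((hdx.const_mul p).add (hdz.const_mul q)) fun ε hε => ?_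
  have hG : Continuous fun y : ℝ × ℝ => p * f y.1 y.2 + q * L y.1 y.2 :=
    (continuous_const.mul hf).add (continuous_const.mul hL)
  have hnear : ∀ᶠ ξ in 𝓝 (x t), ∀ w ∈ Icc (1 : ℝ) 2, m - ε < p * f ξ w + q * L ξ w := by
    refine isCompact_Icc.eventually_forall_of_forall_eventually fun w hw => ?_
    exact continuous_const.continuousAt.eventually_lt hG.continuousAt
      (by have := hm w hw; simp only; linarith)
  obtain ⟨η, hη, hball⟩ := Metric.eventually_nhds_iff.1 hnear
  obtain ⟨δ, hδ, hcont⟩ := Metric.continuousAt_iff.1 hdx.continuousAt (η / 2) (by positivity)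
  refine ⟨δ, hδ, ?_⟩
  filter_upwards [Metric.tendstoUniformlyOn_iff.1 hx (η / 2) (by positivity)] with n hn
  filter_upwards [hu n, hxd n, hzd n] with s h1 h2 h3 hs hst
  refine ⟨_, ((h2 hs).const_mul p).add ((h3 hs).const_mul q), (hball ?_ _ (h1 hs)).le⟩
  have h4 := hn s (Ioo_subset_Icc_self hs)
  rw [dist_comm] at h4
  have h5 := hcont (x := s) (by rwa [Real.dist_eq])
  linarith [dist_triangle (xs n s) (x s) (x t)]

/-- Existence of optimal controls for `x' = f x u`, `u ∈ [1, 2]`, with cost `∫ L x u`, when `f x`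
is increasing and the graph of the cost as a function of the velocity has a supporting line at
each velocity. -/
theorem exists_optimal_pair {f L : ℝ → ℝ → ℝ} (hf : Continuous ↿f) (hL : Continuous ↿L)
    {K : NNReal} (hlip : ∀ w ∈ Icc (1 : ℝ) 2, LipschitzWith K fun ξ => f ξ w)
    (hmono : ∀ ξ, StrictMonoOn (f ξ) (Icc 1 2))
    (hsupp : ∀ ξ, ∀ r ∈ Icc (1 : ℝ) 2, ∃ p, ∀ w ∈ Icc (1 : ℝ) 2,
      L ξ r - p * f ξ r ≤ L ξ w - p * f ξ w)
    {T : ℝ} (hT : 0 ≤ T) (x0 : ℝ) :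
    ∃ x u, IsAdmissiblePair f T x0 x u ∧ ∀ y v, IsAdmissiblePair f T x0 y v →
      (∫ t in Ioo 0 T, L (x t) (u t)) ≤ ∫ t in Ioo 0 T, L (y t) (v t) := by
  obtain ⟨C, hC⟩ := exists_lipschitz_bound hf hL hlip hT x0
  let S : Set ℝ := {J | ∃ x u, IsAdmissiblePair f T x0 x u ∧ J = ∫ t in Ioo 0 T, L (x t) (u t)}
  have hTm : T ∈ Icc 0 T := ⟨hT, le_rfl⟩
  have hSne : S.Nonempty := by
    obtain ⟨x, u, h⟩ := exists_isAdmissiblePair hf hlip hT x0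
    exact ⟨_, x, u, h, rfl⟩
  have hSbdd : BddBelow S := by
    refine ⟨-(C * T), ?_⟩
    rintro _ ⟨x, u, h, rfl⟩
    obtain ⟨-, z, hzl, hz0, hzT, -⟩ := hC x u h
    have := hzl.dist_le_mul T hTm 0 ⟨le_rfl, hT⟩
    rw [Real.dist_eq, Real.dist_eq, hz0, sub_zero, sub_zero, abs_of_nonneg hT, hzT] at this
    exact (abs_le.1 this).1
  obtain ⟨J, -, hJ, hJS⟩ := exists_seq_tendsto_sInf hSne hSbdd
  choose xs us hadm hJeq using hJS
  choose hxl zs hzl hz0 hzT hzd using fun n => hC _ _ (hadm n)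
  obtain ⟨φ, x, hφ, hxc, hxL, hx0, hxu⟩ := exists_subseq_tendstoUniformlyOn_of_lipschitzOnWith hT
    hxl (fun n => (hadm n).2.2.2.1)
  obtain ⟨ψ, z, hψ, -, hzL, hz0', hzu⟩ := exists_subseq_tendstoUniformlyOn_of_lipschitzOnWith hT
    (fun n => hzl (φ n)) (fun n => hz0 (φ n))
  have hxu' : TendstoUniformlyOn (fun n => xs (φ (ψ n))) x atTop (Icc 0 T) := fun U hU =>
    hψ.tendsto_atTop.eventually (hxu U hU)
  have hac : ∀ {y : ℝ → ℝ}, LipschitzOnWith C y (Icc 0 T) →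
      AbsolutelyContinuousOnInterval y 0 T := fun h =>
    LipschitzOnWith.absolutelyContinuousOnInterval (by rwa [uIcc_of_le hT])
  have hlim : ∀ t ∈ Ioo 0 T, DifferentiableAt ℝ x t → DifferentiableAt ℝ z t → ∀ p q m : ℝ,
      (∀ w ∈ Icc (1 : ℝ) 2, m ≤ p * f (x t) w + q * L (x t) w) →
      m ≤ p * deriv x t + q * deriv z t := fun t ht hdx hdz p q m hm =>
    le_add_of_tendstoUniformlyOn hf hL hT (fun n => hxl (φ (ψ n))) (fun n => hzl (φ (ψ n)))
      (us := fun n => us (φ (ψ n)))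
      (fun n => (ae_restrict_iff' measurableSet_Ioo).1 (hadm _).2.1)
      (fun n => (ae_restrict_iff' measurableSet_Ioo).1 (hadm _).2.2.2.2)
      (fun n => hzd _) hxu' hzu ht hdx.hasDerivAt hdz.hasDerivAt hm
  obtain ⟨u, hum, hu, hsel⟩ := exists_measurable_selection hf hmono hxc.measurable
    (measurable_deriv x)
  have hgood : ∀ᵐ t, t ∈ Ioo 0 T → HasDerivAt x (f (x t) (u t)) t ∧
      L (x t) (u t) ≤ deriv z t := by
    filter_upwards [(hac hxL).ae_differentiableAt, (hac hzL).ae_differentiableAt] with t h1 h2 ht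
    have htu : t ∈ uIcc 0 T := by rw [uIcc_of_le hT]; exact Ioo_subset_Icc_self ht
    have hl := hlim t ht (h1 htu) (h2 htu)
    have hle : ∀ {a b : ℝ}, a ∈ Icc (1 : ℝ) 2 → b ∈ Icc (1 : ℝ) 2 → a ≤ b →
        f (x t) a ≤ f (x t) b := fun ha hb hab => ((hmono (x t)).le_iff_le ha hb).2 hab
    have hlow := hl 1 0 (f (x t) 1) fun w hw => by
      linarith [hle (by simp) hw hw.1]
    have hupp := hl (-1) 0 (-f (x t) 2) fun w hw => by
      linarith [hle hw (by simp) hw.2]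
    have hfu := hsel t ⟨by linarith, by linarith⟩
    refine ⟨hfu ▸ (h1 htu).hasDerivAt, ?_⟩
    obtain ⟨p, hp⟩ := hsupp (x t) (u t) (hu t)
    have := hl (-p) 1 (L (x t) (u t) - p * f (x t) (u t)) fun w hw => by linarith [hp w hw]
    rw [hfu] at this
    linarith
  refine ⟨x, u, ⟨hum, ae_of_all _ hu, ⟨C, hxL⟩, hx0, ?_⟩, fun y v hyv => ?_⟩
  · rw [ae_restrict_iff' measurableSet_Ioo]
    exact hgood.mono fun t h ht => (h ht).1
  have hzinf : z T = sInf S := by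
    refine tendsto_nhds_unique (hzu.tendsto_at hTm) ?_
    simp only [hzT, ← hJeq]
    exact (hJ.comp hφ.tendsto_atTop).comp hψ.tendsto_atTop
  calc (∫ t in Ioo 0 T, L (x t) (u t)) ≤ ∫ t in Ioo 0 T, deriv z t := by
        refine setIntegral_mono_ae_restrict
          (integrableOn_comp_control hL hxL.continuousOn hum (ae_of_all _ hu))
          ((intervalIntegrable_iff_integrableOn_Ioo_of_le hT).1
            (hac hzL).intervalIntegrable_deriv) ?_
        rw [EventuallyLE, ae_restrict_iff' measurableSet_Ioo]
        exact hgood.mono fun t h ht => (h ht).2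
    _ = z T := by
        rw [← integral_Ioc_eq_integral_Ioo, ← intervalIntegral.integral_of_le hT,
          (hac hzL).integral_deriv_eq_sub, hz0', sub_zero]
    _ ≤ _ := hzinf ▸ csInf_le hSbdd ⟨y, v, hyv, rfl⟩

theorem stmt_17
    (T : ℝ) (hT : 0 < T) (x0 : ℝ)
    (c β : ℝ → ℝ)
    (hc : ∃ Lc : NNReal, LipschitzWith Lc c)
    (hβ : ∃ Lβ : NNReal, LipschitzWith Lβ β)
    (hβc : ∀ x : ℝ, β x < min 0 (c x)) :
    ∃ (x : ℝ → ℝ) (u : ℝ → ℝ),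
      (Measurable u ∧ (∀ᵐ t ∂(volume.restrict (Set.Ioo 0 T)), u t ∈ Set.Icc (1:ℝ) 2) ∧
       (∃ Lx : NNReal, LipschitzOnWith Lx x (Set.Icc 0 T)) ∧ x 0 = x0 ∧
       (∀ᵐ t ∂(volume.restrict (Set.Ioo 0 T)),
          HasDerivAt x ((c (x t) - β (x t)) * (u t) ^ 2 + (u t) ^ 3) t)) ∧
      ∀ (y : ℝ → ℝ) (v : ℝ → ℝ),
        (Measurable v ∧ (∀ᵐ t ∂(volume.restrict (Set.Ioo 0 T)), v t ∈ Set.Icc (1:ℝ) 2) ∧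
         (∃ Ly : NNReal, LipschitzOnWith Ly y (Set.Icc 0 T)) ∧ y 0 = x0 ∧
         (∀ᵐ t ∂(volume.restrict (Set.Ioo 0 T)),
            HasDerivAt y ((c (y t) - β (y t)) * (v t) ^ 2 + (v t) ^ 3) t)) →
        (∫ t in Set.Ioo 0 T, (c (x t) * (u t) ^ 2 + (u t) ^ 3)) ≤
          (∫ t in Set.Ioo 0 T, (c (y t) * (v t) ^ 2 + (v t) ^ 3)) := by
  obtain ⟨Lc, hc⟩ := hc
  obtain ⟨Lβ, hβ⟩ := hβ
  have hcc := hc.continuous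
  have hβcont := hβ.continuous
  have ha : ∀ ξ, 0 < c ξ - β ξ := fun ξ =>
    sub_pos.2 ((hβc ξ).trans_le (min_le_right _ _))
  have hneg : ∀ ξ, β ξ < 0 := fun ξ => (hβc ξ).trans_le (min_le_left _ _)
  refine exists_optimal_pair (f := fun ξ w => (c ξ - β ξ) * w ^ 2 + w ^ 3)
    (L := fun ξ w => c ξ * w ^ 2 + w ^ 3) (K := (Lc + Lβ) * 4) ?_ ?_ ?_ ?_ ?_ hT.le x0
  · change Continuous fun y : ℝ × ℝ => (c y.1 - β y.1) * y.2 ^ 2 + y.2 ^ 3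
    fun_prop
  · change Continuous fun y : ℝ × ℝ => c y.1 * y.2 ^ 2 + y.2 ^ 3
    fun_prop
  · intro w hw
    refine LipschitzWith.of_dist_le_mul fun ξ ζ => ?_
    have h1 := hc.dist_le_mul ξ ζ
    have h2 := hβ.dist_le_mul ξ ζ
    simp only [Real.dist_eq] at h1 h2 ⊢
    have hw2 : w ^ 2 ≤ 4 := by nlinarith [hw.1, hw.2]
    have h3 : (c ξ - β ξ) * w ^ 2 + w ^ 3 - ((c ζ - β ζ) * w ^ 2 + w ^ 3) =
        ((c ξ - c ζ) - (β ξ - β ζ)) * w ^ 2 := by ring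
    rw [h3, abs_mul, abs_of_nonneg (sq_nonneg w)]
    push_cast
    calc |c ξ - c ζ - (β ξ - β ζ)| * w ^ 2
        ≤ (Lc * |ξ - ζ| + Lβ * |ξ - ζ|) * 4 := by
          gcongr
          exact (abs_sub _ _).trans (add_le_add h1 h2)
      _ = (Lc + Lβ) * 4 * |ξ - ζ| := by ring
  · intro ξ r hr w hw hrw
    have h0 : 0 ≤ r := by linarith [hr.1]
    have h2 : r ^ 2 < w ^ 2 := by gcongr
    have h3 : r ^ 3 < w ^ 3 := by gcongr
    have := mul_lt_mul_of_pos_left h2 (ha ξ)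
    simp only
    linarith
  · intro ξ r hr
    have hpos : 0 < c ξ - β ξ + 3 / 2 * r := by linarith [ha ξ, hr.1]
    obtain ⟨q, hq⟩ : ∃ q, q = -β ξ / (c ξ - β ξ + 3 / 2 * r) := ⟨_, rfl⟩
    have hq0 : 0 ≤ q := hq ▸ div_nonneg (by linarith [hneg ξ]) hpos.le
    have hqe : q * (c ξ - β ξ + 3 / 2 * r) = -β ξ := by
      rw [hq, div_mul_cancel₀ _ hpos.ne']
    refine ⟨1 - q, fun w hw => ?_⟩
    have htan : 0 ≤ w ^ 3 - r ^ 3 - 3 / 2 * r * (w ^ 2 - r ^ 2) := by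
      have : w ^ 3 - r ^ 3 - 3 / 2 * r * (w ^ 2 - r ^ 2) = (w - r) ^ 2 * (w + r / 2) := by ring
      rw [this]
      exact mul_nonneg (sq_nonneg _) (by linarith [hw.1, hr.1])
    have h1 := mul_nonneg hq0 htan
    have h2 : (c ξ * w ^ 2 + w ^ 3 - (1 - q) * ((c ξ - β ξ) * w ^ 2 + w ^ 3)) -
        (c ξ * r ^ 2 + r ^ 3 - (1 - q) * ((c ξ - β ξ) * r ^ 2 + r ^ 3)) =
        q * (w ^ 3 - r ^ 3 - 3 / 2 * r * (w ^ 2 - r ^ 2)) +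
        (q * (c ξ - β ξ + 3 / 2 * r) + β ξ) * (w ^ 2 - r ^ 2) := by ring
    rw [hqe] at h2
    linarith
end
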